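/- For every real ν > 0 and every x with 0 < x ≤ 1, J_ν(νx) ≥ (Γ(1/3)/(2^{2/3} 3^{1/6} π (ν + 0.095)^{1/3})) · x^ν · exp(ν²(1−x²)/(4ν+4)). -/

import Mathlib

open MeasureTheory Real

noncomputable section

/-- The Bessel function of the first kind `J_ν`, defined by its power series. -/
def besselJ (v x : ℝ) : ℝ :=
  ∑' k : ℕ, ((-1 : ℝ) ^ k / (Nat.factorial k * Real.Gamma ((k : ℝ) + v + 1))) *
    (x / 2) ^ (2 * (k : ℝ) + v)

/-!
With `C_v(z) = ∑ z ^ k / (k! Γ(k + v + 1))` one has `J_v(y) = (y / 2) ^ v C_v(-y² / 4)`, and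
`C_v' = C_{v+1} ≤ C_v / (v + 1)` makes `exp (t / (v + 1)) C_v(-t)` antitone in `t`: this is Paris's
inequality, which reduces the theorem to `x = 1`, that is, to Elbert's lower bound for `J_v(v)`.

For `v < 1` the first two terms of the series together with Kershaw's bound for `Γ(v + 1)` give an
explicit lower bound for `J_v(v)`. For `v ≥ 1` Hankel's integral over a vertical line is deformed to
the path of steepest descent of `sinh w - w`, so that `π J_v(v) ≥ ∫ θ in 0..θ₀, exp (-v F(θ))` with
`F(θ) ≤ 4 / (9 √3) (θ³ + 0.005 θ⁶ + 0.00133 θ⁹)`, and the resulting integrals are values of `Γ`.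
-/

open Set Filter
open scoped Nat Topology

/-! ### The Bessel–Clifford function and Paris's inequality -/

/-- The Taylor coefficient `1 / (k! Γ(k + v + 1))` of the Bessel–Clifford function. -/
def besselCliffordCoeff (v : ℝ) (k : ℕ) : ℝ := (k ! * Gamma (k + v + 1))⁻¹

/-- The Bessel–Clifford function `C_v(z) = ∑ z ^ k / (k! Γ(k + v + 1))`, the entire part of the
Bessel function: `J_v(y) = (y / 2) ^ v C_v(-y² / 4)`. -/
def besselClifford (v z : ℝ) : ℝ := ∑' k : ℕ, besselCliffordCoeff v k * z ^ k

lemma succ_mul_besselCliffordCoeff_succ (v : ℝ) (k : ℕ) :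
    (k + 1) * besselCliffordCoeff v (k + 1) = besselCliffordCoeff (v + 1) k := by
  have hk : (k + 1 : ℝ) ≠ 0 := by positivity
  have harg : ((k + 1 : ℕ) : ℝ) + v + 1 = k + (v + 1) + 1 := by push_cast; ring
  rw [besselCliffordCoeff, besselCliffordCoeff, harg, Nat.factorial_succ, Nat.cast_mul,
    Nat.cast_succ, mul_assoc, mul_inv, mul_inv_cancel_left₀ hk]

section Nonneg

variable {v : ℝ}

lemma besselCliffordCoeff_eq_mul (hv : 0 ≤ v) (k : ℕ) :
    besselCliffordCoeff v k = (k + v + 1) * besselCliffordCoeff (v + 1) k := by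
  have hk : (k + v + 1 : ℝ) ≠ 0 := by positivity
  rw [besselCliffordCoeff, besselCliffordCoeff, show (k : ℝ) + (v + 1) + 1 = k + v + 1 + 1 by ring,
    Gamma_add_one hk]
  field_simp

lemma besselCliffordCoeff_pos (hv : 0 ≤ v) (k : ℕ) : 0 < besselCliffordCoeff v k :=
  inv_pos.2 (mul_pos (by positivity) (Gamma_pos_of_pos (by positivity)))

lemma besselCliffordCoeff_succ_mul (hv : 0 ≤ v) (k : ℕ) :
    (k + 1) * (k + v + 1) * besselCliffordCoeff v (k + 1) = besselCliffordCoeff v k := by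
  rw [besselCliffordCoeff_eq_mul hv k, ← succ_mul_besselCliffordCoeff_succ]
  ring

lemma besselCliffordCoeff_le (hv : 0 ≤ v) (k : ℕ) :
    besselCliffordCoeff v k ≤ (Gamma (v + 1))⁻¹ / k ! := by
  induction k with
  | zero => simp [besselCliffordCoeff]
  | succ k ih =>
    have hpos := besselCliffordCoeff_pos hv (k + 1)
    have hstep : (k + 1) * besselCliffordCoeff v (k + 1) ≤ besselCliffordCoeff v k := by
      rw [← besselCliffordCoeff_succ_mul hv k]
      gcongr
      nlinarith [(k.cast_nonneg : (0 : ℝ) ≤ k)]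
    rw [Nat.factorial_succ, Nat.cast_mul, Nat.cast_succ, mul_comm, ← div_div,
      le_div_iff₀ (by positivity), mul_comm]
    exact hstep.trans ih

lemma norm_besselCliffordCoeff_mul_pow_le (hv : 0 ≤ v) {z R : ℝ} (hz : |z| ≤ R) (k : ℕ) :
    ‖besselCliffordCoeff v k * z ^ k‖ ≤ (Gamma (v + 1))⁻¹ * (R ^ k / k !) := by
  rw [norm_mul, norm_pow, norm_of_nonneg (besselCliffordCoeff_pos hv k).le, norm_eq_abs,
    mul_div_left_comm, mul_comm (R ^ k)]
  exact mul_le_mul (besselCliffordCoeff_le hv k) (by gcongr) (by positivity)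
    (by have := Gamma_pos_of_pos (by positivity : 0 < v + 1); positivity)

lemma summable_besselClifford (hv : 0 ≤ v) (z : ℝ) :
    Summable fun k => besselCliffordCoeff v k * z ^ k :=
  .of_norm_bounded ((summable_pow_div_factorial |z|).mul_left _)
    (norm_besselCliffordCoeff_mul_pow_le hv le_rfl)

lemma hasDerivAt_besselClifford (hv : 0 ≤ v) (z : ℝ) :
    HasDerivAt (besselClifford v) (besselClifford (v + 1) z) z := by
  set R := |z| + 1
  have hsucc (k : ℕ) (y : ℝ) :
      besselCliffordCoeff v (k + 1) * ((k + 1 : ℕ) * y ^ (k + 1 - 1)) =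
        besselCliffordCoeff (v + 1) k * y ^ k := by
    rw [← succ_mul_besselCliffordCoeff_succ, Nat.cast_succ, Nat.add_sub_cancel]
    ring
  set u : ℕ → ℝ := fun k => (Gamma (v + 1 + 1))⁻¹ * (R ^ (k - 1) / (k - 1)!)
  have hu : Summable u := by
    rw [← summable_nat_add_iff 1]
    simpa [u] using (summable_pow_div_factorial R).mul_left _
  have hbound (k : ℕ) (y : ℝ) (hy : |y| ≤ R) :
      ‖besselCliffordCoeff v k * (k * y ^ (k - 1))‖ ≤ u k := by
    cases k with
    | zero =>
      have := Gamma_pos_of_pos (by positivity : 0 < v + 1 + 1)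
      simp only [CharP.cast_eq_zero, zero_mul, mul_zero, norm_zero, u]
      positivity
    | succ k =>
      rw [hsucc]
      exact norm_besselCliffordCoeff_mul_pow_le (by positivity) hy k
  have hmem {y : ℝ} (hy : y ∈ Metric.ball 0 R) : |y| ≤ R := by simpa using (Metric.mem_ball.1 hy).le
  have hderiv := hasDerivAt_tsum_of_isPreconnected hu Metric.isOpen_ball
    (convex_ball (0 : ℝ) R).isPreconnected
    (fun k y _ => (hasDerivAt_pow k y).const_mul (besselCliffordCoeff v k))
    (fun k y hy => hbound k y (hmem hy)) (Metric.mem_ball_self (by positivity))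
    (summable_besselClifford hv 0) (y := z) (by simp [R])
  have hsum : Summable fun k : ℕ => besselCliffordCoeff v k * (k * z ^ (k - 1)) :=
    .of_norm_bounded hu fun k => hbound k z (by simp [R])
  rw [hsum.tsum_eq_zero_add] at hderiv
  simp only [CharP.cast_eq_zero, zero_mul, mul_zero, zero_add, hsucc] at hderiv
  exact hderiv

lemma besselClifford_eq (hv : 0 ≤ v) (z : ℝ) :
    besselClifford v z =
      (v + 1) * besselClifford (v + 1) z + z * besselClifford (v + 2) z := by
  have hsum₁ := summable_besselClifford (by positivity : 0 ≤ v + 1) z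
  have hsum₂ := summable_besselClifford (by positivity : 0 ≤ v + 2) z
  simp only [besselClifford]
  rw [(summable_besselClifford hv z).tsum_eq_zero_add, hsum₁.tsum_eq_zero_add, mul_add,
    ← tsum_mul_left, ← tsum_mul_left, add_assoc,
    ← (((summable_nat_add_iff 1).2 hsum₁).mul_left _).tsum_add (hsum₂.mul_left _)]
  congr 1
  · rw [besselCliffordCoeff_eq_mul hv, CharP.cast_eq_zero, zero_add, mul_assoc]
  · refine tsum_congr fun k => ?_
    have hrec := succ_mul_besselCliffordCoeff_succ (v + 1) k
    rw [show v + 1 + 1 = v + 2 by ring] at hrec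
    rw [besselCliffordCoeff_eq_mul hv (k + 1), ← hrec, Nat.cast_succ]
    ring

lemma antitone_besselCliffordCoeff_mul_pow (hv : 0 ≤ v) {z : ℝ} (hz : 0 ≤ z) (hzv : z ≤ v + 1) :
    Antitone fun k => besselCliffordCoeff v k * z ^ k := by
  refine antitone_nat_of_succ_le fun k => ?_
  have hpos := besselCliffordCoeff_pos hv (k + 1)
  have hzk : z ≤ (k + 1) * (k + v + 1) := by
    nlinarith [(k.cast_nonneg : (0 : ℝ) ≤ k), mul_nonneg (k.cast_nonneg : (0 : ℝ) ≤ k) hv]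
  calc besselCliffordCoeff v (k + 1) * z ^ (k + 1)
      = z * besselCliffordCoeff v (k + 1) * z ^ k := by ring
    _ ≤ (k + 1) * (k + v + 1) * besselCliffordCoeff v (k + 1) * z ^ k := by gcongr
    _ = besselCliffordCoeff v k * z ^ k := by rw [besselCliffordCoeff_succ_mul hv]

lemma tendsto_alternating_besselClifford (hv : 0 ≤ v) (z : ℝ) :
    Tendsto (fun n => ∑ k ∈ Finset.range n, (-1) ^ k * (besselCliffordCoeff v k * z ^ k)) atTop
      (𝓝 (besselClifford v (-z))) := by
  refine (summable_besselClifford hv (-z)).hasSum.tendsto_sum_nat.congr fun n => ?_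
  refine Finset.sum_congr rfl fun k _ => ?_
  rw [neg_pow]
  ring

lemma one_sub_div_le_Gamma_mul_besselClifford_neg (hv : 0 ≤ v) {z : ℝ} (hz : 0 ≤ z)
    (hzv : z ≤ v + 1) : 1 - z / (v + 1) ≤ Gamma (v + 1) * besselClifford v (-z) := by
  have hΓ := Gamma_pos_of_pos (by positivity : 0 < v + 1)
  have hle := (antitone_besselCliffordCoeff_mul_pow hv hz hzv).alternating_series_le_tendsto
    (tendsto_alternating_besselClifford hv z) 1
  have hcoeff : besselCliffordCoeff v 1 = ((v + 1) * Gamma (v + 1))⁻¹ := by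
    rw [← Gamma_add_one (by positivity), besselCliffordCoeff]
    simp [add_comm, add_left_comm]
  have hcoeff₀ : besselCliffordCoeff v 0 = (Gamma (v + 1))⁻¹ := by simp [besselCliffordCoeff]
  rw [Finset.sum_range_succ, Finset.sum_range_one, hcoeff₀, hcoeff] at hle
  rw [← inv_mul_le_iff₀ hΓ]
  refine le_of_eq_of_le ?_ hle
  field_simp
  ring

lemma Gamma_mul_besselClifford_neg_le_one (hv : 0 ≤ v) {z : ℝ} (hz : 0 ≤ z) (hzv : z ≤ v + 1) :
    Gamma (v + 1) * besselClifford v (-z) ≤ 1 := by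
  have hle := (antitone_besselCliffordCoeff_mul_pow hv hz hzv).tendsto_le_alternating_series
    (tendsto_alternating_besselClifford hv z) 0
  rw [← le_inv_mul_iff₀ (Gamma_pos_of_pos (by positivity : 0 < v + 1)), mul_one]
  simpa [besselCliffordCoeff] using hle

lemma besselClifford_ratio_of_sq_le {y : ℝ} (hy : 0 ≤ y) (hv : 0 ≤ v) (hyv : y ≤ v + 1)
    (hsq : y ^ 2 / 2 ≤ v + 1) :
    0 < besselClifford (v + 1) (-(y ^ 2 / 4)) ∧
      y / 2 * besselClifford (v + 1) (-(y ^ 2 / 4)) ≤ besselClifford v (-(y ^ 2 / 4)) := by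
  have hz : 0 ≤ y ^ 2 / 4 := by positivity
  have hv₁ : 0 ≤ v + 1 := by positivity
  have hΓ := Gamma_pos_of_pos (by positivity : 0 < v + 1)
  have hlower := one_sub_div_le_Gamma_mul_besselClifford_neg hv hz (by linarith)
  have hlower₁ := one_sub_div_le_Gamma_mul_besselClifford_neg hv₁ hz (by linarith)
  have hupper₁ := Gamma_mul_besselClifford_neg_le_one hv₁ hz (by linarith)
  rw [Gamma_add_one (by positivity), mul_assoc] at hlower₁ hupper₁
  have hhalf : y ^ 2 / 4 / (v + 1) ≤ 1 / 2 := by rw [div_le_iff₀ (by positivity)]; linarith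
  have hhalf₁ : y ^ 2 / 4 / (v + 1 + 1) ≤ 1 / 2 := by rw [div_le_iff₀ (by positivity)]; linarith
  have hpos : 0 < Gamma (v + 1) * besselClifford (v + 1) (-(y ^ 2 / 4)) :=
    (mul_pos_iff_of_pos_left (by positivity : 0 < v + 1)).1 (by linarith)
  refine ⟨(mul_pos_iff_of_pos_left hΓ).1 hpos, le_of_mul_le_mul_left ?_ hΓ⟩
  nlinarith

/-- Downward induction on the order: the recurrence propagates the ratio bound from order `v + 1`
to order `v`, and for orders large compared with `y²` it follows from the alternating series. -/
lemma besselClifford_ratio {y : ℝ} (hy : 0 < y) (n : ℕ) :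
    ∀ {v : ℝ}, 0 ≤ v → y ≤ v + 1 → y ^ 2 / 2 ≤ v + n + 1 →
      0 < besselClifford (v + 1) (-(y ^ 2 / 4)) ∧
        y / 2 * besselClifford (v + 1) (-(y ^ 2 / 4)) ≤ besselClifford v (-(y ^ 2 / 4)) := by
  induction n with
  | zero =>
    intro v hv hyv hn
    exact besselClifford_ratio_of_sq_le hy.le hv hyv (by simpa using hn)
  | succ n ih =>
    intro v hv hyv hn
    push_cast at hn
    obtain ⟨hpos₂, hratio⟩ := ih (by positivity : 0 ≤ v + 1) (by linarith) (by linarith)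
    have hrec := besselClifford_eq hv (-(y ^ 2 / 4))
    rw [show v + 1 + 1 = v + 2 by ring] at hpos₂ hratio
    have hpos₁ : 0 < besselClifford (v + 1) (-(y ^ 2 / 4)) := lt_of_lt_of_le (by positivity) hratio
    exact ⟨hpos₁, by nlinarith⟩

lemma besselClifford_neg_pos {t : ℝ} (hv : 0 ≤ v) (ht : 0 < t) (htv : t ≤ (v + 1) ^ 2 / 4) :
    0 < besselClifford (v + 1) (-t) := by
  have hsq : (2 * √t) ^ 2 / 4 = t := by rw [mul_pow, sq_sqrt ht.le]; ring
  obtain ⟨n, hn⟩ := exists_nat_ge ((2 * √t) ^ 2 / 2)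
  have hpos := (besselClifford_ratio (by positivity : 0 < 2 * √t) n hv
    (abs_le_of_sq_le_sq' (by linarith) (by positivity)).2 (by linarith)).1
  rwa [hsq] at hpos

lemma antitoneOn_besselClifford_neg_mul_exp (hv : 0 ≤ v) :
    AntitoneOn (fun t => besselClifford v (-t) * exp (t / (v + 1))) (Icc 0 ((v + 2) ^ 2 / 4)) := by
  have hderiv (t : ℝ) : HasDerivAt (fun t => besselClifford v (-t) * exp (t / (v + 1)))
      (besselClifford (v + 1) (-t) * -1 * exp (t / (v + 1)) +
        besselClifford v (-t) * (exp (t / (v + 1)) * (1 / (v + 1)))) t :=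
    ((hasDerivAt_besselClifford hv (-t)).comp t (hasDerivAt_neg t)).mul
      ((hasDerivAt_id t).div_const (v + 1)).exp
  refine antitoneOn_of_hasDerivWithinAt_nonpos (convex_Icc _ _)
    (fun t _ => (hderiv t).continuousAt.continuousWithinAt)
    (fun t _ => (hderiv t).hasDerivWithinAt) fun t ht => ?_
  rw [interior_Icc] at ht
  have hpos : 0 < besselClifford (v + 2) (-t) := by
    have h := besselClifford_neg_pos (by positivity : 0 ≤ v + 1) ht.1
      (ht.2.le.trans_eq (by ring))
    rwa [add_assoc, one_add_one_eq_two] at h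
  calc _ = -(t * besselClifford (v + 2) (-t) * (exp (t / (v + 1)) / (v + 1))) := by
        rw [besselClifford_eq hv (-t)]
        field_simp
        ring
    _ ≤ 0 := neg_nonpos.2 (mul_nonneg (mul_nonneg ht.1.le hpos.le) (by positivity))

end Nonneg

lemma besselJ_eq_rpow_mul_besselClifford (v : ℝ) {y : ℝ} (hy : 0 < y) :
    besselJ v y = (y / 2) ^ v * besselClifford v (-(y ^ 2 / 4)) := by
  rw [besselJ, besselClifford, ← tsum_mul_left]
  refine tsum_congr fun k => ?_
  rw [rpow_add (by positivity), rpow_mul (by positivity), rpow_natCast, rpow_two,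
    neg_pow (y ^ 2 / 4) k, besselCliffordCoeff, div_pow, show (2 : ℝ) ^ 2 = 4 by norm_num]
  ring

/-- Paris's inequality. -/
lemma besselJ_mul_rpow_mul_exp_le {v x : ℝ} (hv : 0 < v) (hx : 0 < x) (hx₁ : x ≤ 1) :
    besselJ v v * x ^ v * exp (v ^ 2 * (1 - x ^ 2) / (4 * v + 4)) ≤ besselJ v (v * x) := by
  have hle : (v * x) ^ 2 / 4 ≤ v ^ 2 / 4 := by
    rw [mul_pow]; nlinarith [pow_le_one₀ hx.le hx₁ (n := 2), sq_nonneg v]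
  have hanti := antitoneOn_besselClifford_neg_mul_exp hv.le
    ⟨by positivity, by nlinarith⟩ ⟨by positivity, by nlinarith⟩ hle
  have hexp : exp (v ^ 2 / 4 / (v + 1)) =
      exp ((v * x) ^ 2 / 4 / (v + 1)) * exp (v ^ 2 * (1 - x ^ 2) / (4 * v + 4)) := by
    rw [← exp_add]; congr 1; field_simp; ring
  have hpow : (v * x / 2) ^ v = (v / 2) ^ v * x ^ v := by
    rw [← mul_rpow (by positivity) hx.le]; congr 1; ring
  rw [besselJ_eq_rpow_mul_besselClifford v hv,
    besselJ_eq_rpow_mul_besselClifford v (mul_pos hv hx), hpow]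
  simp only [hexp] at hanti
  have hmain : besselClifford v (-(v ^ 2 / 4)) * exp (v ^ 2 * (1 - x ^ 2) / (4 * v + 4)) ≤
      besselClifford v (-((v * x) ^ 2 / 4)) :=
    le_of_mul_le_mul_right (by linarith) (exp_pos ((v * x) ^ 2 / 4 / (v + 1)))
  calc _ = (v / 2) ^ v * x ^ v * (besselClifford v (-(v ^ 2 / 4)) *
        exp (v ^ 2 * (1 - x ^ 2) / (4 * v + 4))) := by ring
    _ ≤ _ := by gcongr

/-! ### Kershaw's inequality for the Gamma function -/

lemma log_one_add_sub_log_one_sub_mul_le {y t : ℝ} (hy : 0 ≤ y) (hy₁ : y < 1) (ht : 0 ≤ t)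
    (ht₁ : t ≤ 1) :
    log (1 + t * y) - log (1 - t * y) ≤ t * (log (1 + y) - log (1 - y)) := by
  have hty : t * y ≤ y := mul_le_of_le_one_left hy ht₁
  refine hasSum_le (fun k => ?_)
    (hasSum_log_sub_log_of_abs_lt_one (x := t * y)
      (by rw [abs_of_nonneg (by positivity)]; linarith))
    ((hasSum_log_sub_log_of_abs_lt_one (x := y) (by rwa [abs_of_nonneg hy])).mul_left t)
  have hpow : (t * y) ^ (2 * k + 1) ≤ t * y ^ (2 * k + 1) := by
    rw [mul_pow]
    gcongr
    exact pow_le_of_le_one ht ht₁ (by omega)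
  rw [mul_left_comm t]
  gcongr

section Kershaw

variable {y s : ℝ}

lemma mul_rpow_le_mul_rpow_add_one (hy : 0 < y) (hs : 0 ≤ s) (hs₁ : s ≤ 1) :
    (y + 1) * (y + s / 2) ^ (1 - s) ≤ (y + s) * (y + 1 + s / 2) ^ (1 - s) := by
  have hd : 0 < 2 * y + 1 + s := by positivity
  have hlog := log_one_add_sub_log_one_sub_mul_le (y := 1 / (2 * y + 1 + s)) (by positivity)
    (by rw [div_lt_one hd]; linarith) (sub_nonneg.2 hs₁) (by linarith)
  rw [show 1 + (1 - s) * (1 / (2 * y + 1 + s)) = 2 * (y + 1) / (2 * y + 1 + s) by field_simp; ring,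
    show 1 - (1 - s) * (1 / (2 * y + 1 + s)) = 2 * (y + s) / (2 * y + 1 + s) by field_simp; ring,
    show 1 + 1 / (2 * y + 1 + s) = 2 * (y + 1 + s / 2) / (2 * y + 1 + s) by field_simp; ring,
    show 1 - 1 / (2 * y + 1 + s) = 2 * (y + s / 2) / (2 * y + 1 + s) by field_simp; ring,
    ← log_div (by positivity) (by positivity), ← log_div (by positivity) (by positivity),
    div_div_div_cancel_right₀ hd.ne', div_div_div_cancel_right₀ hd.ne',
    mul_div_mul_left _ _ two_ne_zero, mul_div_mul_left _ _ two_ne_zero,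
    ← log_rpow (by positivity), log_le_log_iff (by positivity) (by positivity),
    div_rpow (by positivity) (by positivity), div_le_div_iff₀ (by positivity) (by positivity)]
    at hlog
  linarith

lemma rpow_mul_Gamma_div_Gamma_le_add_one (hy : 0 < y) (hs : 0 ≤ s) (hs₁ : s ≤ 1) :
    (y + s / 2) ^ (1 - s) * Gamma (y + s) / Gamma (y + 1) ≤
      (y + 1 + s / 2) ^ (1 - s) * Gamma (y + 1 + s) / Gamma (y + 1 + 1) := by
  have := Gamma_pos_of_pos (by positivity : 0 < y + s)
  have hΓ := Gamma_pos_of_pos (by positivity : 0 < y + 1)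
  rw [show y + 1 + s = y + s + 1 by ring, Gamma_add_one (by positivity : y + s ≠ 0),
    Gamma_add_one (by positivity : y + 1 ≠ 0), div_le_div_iff₀ hΓ (by positivity)]
  calc _ = (y + 1) * (y + s / 2) ^ (1 - s) * (Gamma (y + s) * Gamma (y + 1)) := by ring
    _ ≤ (y + s) * (y + 1 + s / 2) ^ (1 - s) * (Gamma (y + s) * Gamma (y + 1)) :=
      mul_le_mul_of_nonneg_right (mul_rpow_le_mul_rpow_add_one hy hs hs₁) (by positivity)
    _ = _ := by ring

lemma rpow_mul_Gamma_div_Gamma_le_add_natCast (hy : 0 < y) (hs : 0 ≤ s) (hs₁ : s ≤ 1) (n : ℕ) :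
    (y + s / 2) ^ (1 - s) * Gamma (y + s) / Gamma (y + 1) ≤
      (y + n + s / 2) ^ (1 - s) * Gamma (y + n + s) / Gamma (y + n + 1) := by
  induction n with
  | zero => simp
  | succ n ih =>
    refine ih.trans ?_
    rw [Nat.cast_succ, ← add_assoc]
    exact rpow_mul_Gamma_div_Gamma_le_add_one (by positivity) hs hs₁

lemma Gamma_add_le_rpow_mul_Gamma_add_one (hy : 0 < y) (hs : 0 < s) (hs₁ : s < 1) :
    Gamma (y + s) ≤ y ^ (s - 1) * Gamma (y + 1) := by
  have hΓ := Gamma_pos_of_pos hy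
  have hconv := Gamma_mul_add_mul_le_rpow_Gamma_mul_rpow_Gamma hy (by positivity : 0 < y + 1)
    (sub_pos.2 hs₁) hs (sub_add_cancel 1 s)
  rw [show (1 - s) * y + s * (y + 1) = y + s by ring, Gamma_add_one hy.ne',
    mul_rpow hy.le hΓ.le, mul_left_comm, ← rpow_add hΓ, sub_add_cancel, rpow_one] at hconv
  rwa [Gamma_add_one hy.ne', ← mul_assoc, rpow_sub_one hy.ne', div_mul_cancel₀ _ hy.ne']

/-- **Kershaw's inequality.** The quotient of the two sides increases under `y ↦ y + 1`, and by
log-convexity of `Γ` it has limit at most `1` along `y + n`. -/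
lemma rpow_mul_Gamma_add_le (hy : 0 < y) (hs : 0 < s) (hs₁ : s < 1) :
    (y + s / 2) ^ (1 - s) * Gamma (y + s) ≤ Gamma (y + 1) := by
  rw [← div_le_one (Gamma_pos_of_pos (by positivity))]
  have hlim : Tendsto (fun n : ℕ => (1 + s / 2 / (y + n)) ^ (1 - s)) atTop (𝓝 1) := by
    have hzero : Tendsto (fun n : ℕ => s / 2 / (y + n)) atTop (𝓝 0) :=
      (tendsto_atTop_add_const_left _ y tendsto_natCast_atTop_atTop).const_div_atTop _
    simpa using (hzero.const_add 1).rpow_const (p := 1 - s) (Or.inl (by simp))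
  refine ge_of_tendsto' hlim fun n =>
    (rpow_mul_Gamma_div_Gamma_le_add_natCast hy hs.le hs₁.le n).trans ?_
  have hyn : 0 < y + n := by positivity
  rw [div_le_iff₀ (Gamma_pos_of_pos (by positivity))]
  calc _ ≤ (y + n + s / 2) ^ (1 - s) * ((y + n) ^ (s - 1) * Gamma (y + n + 1)) := by
        gcongr
        exact Gamma_add_le_rpow_mul_Gamma_add_one hyn hs hs₁
    _ = _ := by
        rw [one_add_div hyn.ne', div_rpow (by positivity) hyn.le, ← neg_sub 1 s, rpow_neg hyn.le]
        ring

end Kershaw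

lemma Gamma_add_natCast {y : ℝ} (hy : 0 < y) (n : ℕ) :
    Gamma (y + n) = (∏ k ∈ Finset.range n, (y + k)) * Gamma y := by
  induction n with
  | zero => simp
  | succ n ih =>
    rw [Nat.cast_succ, ← add_assoc, Gamma_add_one (by positivity), ih, Finset.prod_range_succ]
    ring

lemma Gamma_one_third_pow_three_le : Gamma (1 / 3) ^ 3 ≤ 19.232 := by
  have hkershaw := rpow_mul_Gamma_add_le (y := 12) (s := 1 / 3) (by norm_num) (by norm_num)
    (by norm_num)
  have hΓ := Gamma_pos_of_pos (by norm_num : (0 : ℝ) < 1 / 3)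
  have hshift := Gamma_add_natCast (y := 1 / 3) (by norm_num) 12
  have hfactorial : Gamma (12 + 1) = 12 ! := by exact_mod_cast Gamma_nat_eq_factorial 12
  rw [add_comm, Nat.cast_ofNat] at hshift
  rw [hshift, hfactorial] at hkershaw
  have hcube := pow_le_pow_left₀ (by positivity) hkershaw 3
  rw [mul_pow, mul_pow, ← rpow_natCast (_ ^ _), ← rpow_mul (by norm_num),
    show (1 - 1 / 3 : ℝ) * (3 : ℕ) = (2 : ℕ) by norm_num, rpow_natCast] at hcube
  norm_num [Finset.prod_range_succ, Nat.factorial] at hcube ⊢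
  linarith

/-! ### Orders below one -/

lemma log_le_natCast_mul {x q : ℝ} (n m : ℕ) (hx : 0 < x) (hq : 0 ≤ q)
    (h : x ≤ (∑ i ∈ Finset.range m, q ^ i / i !) ^ n) : log x ≤ n * q := by
  rw [log_le_iff_le_exp hx, exp_nat_mul]
  refine h.trans ?_
  gcongr
  exact sum_le_exp_of_nonneg hq m

lemma natCast_mul_le_log {x q : ℝ} (n : ℕ) {m : ℕ} (hm : 0 < m) (hx : 0 < x) (hq : 0 ≤ q)
    (hq₁ : q ≤ 1)
    (h : (∑ i ∈ Finset.range m, q ^ i / i ! + q ^ m * (m + 1) / (m ! * m)) ^ n ≤ x) :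
    n * q ≤ log x := by
  rw [le_log_iff_exp_le hx, exp_nat_mul]
  refine le_trans ?_ h
  gcongr
  exact exp_bound' hq hq₁ hm

lemma tangent_le_of_convexOn {S : Set ℝ} {f : ℝ → ℝ} {f' s x : ℝ} (hf : ConvexOn ℝ S f)
    (hs : s ∈ S) (hx : x ∈ S) (hf' : HasDerivAt f f' s) : f s + f' * (x - s) ≤ f x := by
  rcases lt_trichotomy x s with hlt | rfl | hgt
  · have hslope := hf.slope_le_of_hasDerivAt hx hs hlt hf'
    rw [slope_def_field, div_le_iff₀ (sub_pos.2 hlt)] at hslope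
    linarith
  · simp
  · have hslope := hf.le_slope_of_hasDerivAt hs hx hgt hf'
    rw [slope_def_field, le_div_iff₀ (sub_pos.2 hgt)] at hslope
    linarith

lemma le_add_of_le_tangent_add {S : Set ℝ} {f g : ℝ → ℝ} {f' s p q x c : ℝ}
    (hf : ConvexOn ℝ S f) (hg : ConcaveOn ℝ (Icc p q) g) (hs : s ∈ S) (hxS : x ∈ S)
    (hx : x ∈ Icc p q) (hf' : HasDerivAt f f' s) (hp : c ≤ f s + f' * (p - s) + g p)
    (hq : c ≤ f s + f' * (q - s) + g q) : c ≤ f x + g x := by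
  have hpq := hx.1.trans hx.2
  have hconcave : ConcaveOn ℝ (Icc p q) fun y => f s + f' * (y - s) + g y := by
    refine ConcaveOn.add ⟨convex_Icc _ _, fun y _ z _ a b _ _ hab => le_of_eq ?_⟩ hg
    simp only [smul_eq_mul]
    linear_combination (f s - f' * s) * hab
  calc c ≤ f s + f' * (x - s) + g x :=
        (le_min hp hq).trans (hconcave.min_le_of_mem_Icc ⟨le_rfl, hpq⟩ ⟨hpq, le_rfl⟩ hx)
    _ ≤ f x + g x := by
        gcongr
        exact tangent_le_of_convexOn hf hs hxS hf'

lemma concaveOn_log_comp {S : Set ℝ} {f : ℝ → ℝ} (hf : ConcaveOn ℝ S f) (hpos : ∀ x ∈ S, 0 < f x) :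
    ConcaveOn ℝ S fun x => log (f x) := by
  refine ⟨hf.1, fun x hx y hy a b ha hb hab => ?_⟩
  exact (strictConcaveOn_log_Ioi.concaveOn.2 (hpos x hx) (hpos y hy) ha hb hab).trans
    (log_le_log (convex_Ioi (0 : ℝ) (hpos x hx) (hpos y hy) ha hb hab) (hf.2 hx hy ha hb hab))

lemma concaveOn_quadratic {S : Set ℝ} (hS : Convex ℝ S) {a : ℝ} (ha : a ≤ 0) (b c : ℝ) :
    ConcaveOn ℝ S fun x => a * x ^ 2 + b * x + c := by
  refine ⟨hS, fun x _ y _ α β hα hβ hαβ => ?_⟩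
  obtain rfl : β = 1 - α := by linarith
  simp only [smul_eq_mul]
  nlinarith [mul_nonneg (mul_nonneg hα hβ) (mul_nonneg (neg_nonneg.2 ha) (sq_nonneg (x - y)))]

lemma hasDerivAt_three_mul_log_add_log {c t : ℝ} (hc : 0 ≤ c) (ht : 0 < t) :
    HasDerivAt (fun v => 3 * (v * log v) + log (v + c)) (3 * (log t + 1) + (t + c)⁻¹) t := by
  have htc : t + c ≠ 0 := by positivity
  simpa using ((hasDerivAt_mul_log ht.ne').const_mul 3).fun_add
    (((hasDerivAt_id t).add_const c).log htc)

lemma convexOn_three_mul_log_add_log {c : ℝ} (hc : 1 / 12 ≤ c) :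
    ConvexOn ℝ (Ioi 0) fun v => 3 * (v * log v) + log (v + c) := by
  have hc₀ : 0 ≤ c := by linarith
  have hderiv {t : ℝ} (ht : t ∈ Ioi 0) := hasDerivAt_three_mul_log_add_log hc₀ (mem_Ioi.1 ht)
  have hderiv₂ {t : ℝ} (ht : t ∈ Ioi 0) :
      HasDerivAt (fun v => 3 * (log v + 1) + (v + c)⁻¹) (3 * t⁻¹ + -1 / (t + c) ^ 2) t :=
    (((hasDerivAt_log (mem_Ioi.1 ht).ne').add_const 1).const_mul 3).fun_add
      (((hasDerivAt_id t).add_const c).fun_inv (add_pos_of_pos_of_nonneg ht hc₀).ne')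
  refine convexOn_of_hasDerivWithinAt2_nonneg (convex_Ioi 0)
    (fun t ht => (hderiv ht).continuousAt.continuousWithinAt)
    (fun t ht => (hderiv (interior_subset ht)).hasDerivWithinAt)
    (fun t ht => (hderiv₂ (interior_subset ht)).hasDerivWithinAt) fun t ht => ?_
  have ht₀ : 0 < t := interior_subset ht
  rw [← div_eq_mul_inv, div_add_div _ _ (by positivity) (by positivity)]
  refine div_nonneg ?_ (by positivity)
  nlinarith [sq_nonneg (t - c)]

/-- The rational factor in the lower bound `(v / (6 + v)) ^ v * smallOrderFactor v` for `J_v(v)`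
at orders `0 < v < 1`. -/
def smallOrderFactor (v : ℝ) : ℝ := (1 + v / 6) * (1 + v / 2) * (1 + v - v ^ 2 / 4)

lemma smallOrderFactor_pos {v : ℝ} (hv : v ∈ Icc 0 1) : 0 < smallOrderFactor v := by
  have hv₀ : 0 ≤ v := hv.1
  have hquad : 0 < 1 + v - v ^ 2 / 4 := by nlinarith [hv.2]
  rw [smallOrderFactor]
  positivity

lemma concaveOn_log_smallOrderFactor :
    ConcaveOn ℝ (Icc 0 1) fun v => log (smallOrderFactor v) := by
  have hconv : Convex ℝ (Icc (0 : ℝ) 1) := convex_Icc 0 1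
  have hquad {v : ℝ} (hv : v ∈ Icc 0 1) : 0 < 1 + v - v ^ 2 / 4 := by nlinarith [hv.1, hv.2]
  have hlin := concaveOn_log_comp (concaveOn_quadratic hconv le_rfl (1 / 6) 1)
    fun v hv => by linarith [hv.1]
  have hlin' := concaveOn_log_comp (concaveOn_quadratic hconv le_rfl (1 / 2) 1)
    fun v hv => by linarith [hv.1]
  have hquad' := concaveOn_log_comp
    (concaveOn_quadratic hconv (by norm_num : (-1 / 4 : ℝ) ≤ 0) 1 1)
    fun v hv => by linarith [hquad hv]
  refine ((hlin.add hlin').add hquad').congr fun v hv => ?_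
  have hv₀ : 0 ≤ v := hv.1
  rw [smallOrderFactor, log_mul (by positivity) (hquad hv).ne', log_mul (by positivity)
    (by positivity), Pi.add_apply, Pi.add_apply]
  ring_nf

lemma concaveOn_neg_mul_log_six_add : ConcaveOn ℝ (Icc 0 1) fun v => -(v * log (6 + v)) := by
  have hentropy : ConcaveOn ℝ (Icc 0 1) fun v : ℝ => -((6 + v) * log (6 + v)) :=
    ((convexOn_mul_log.translate_right 6).neg).subset
      (fun v hv => show (0 : ℝ) ≤ 6 + v by linarith [hv.1]) (convex_Icc 0 1)
  have hlog : ConcaveOn ℝ (Icc (0 : ℝ) 1) fun v => 6 * log (6 + v) :=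
    ((strictConcaveOn_log_Ioi.concaveOn.translate_right 6).subset
      (fun v hv => show (0 : ℝ) < 6 + v by linarith [hv.1]) (convex_Icc 0 1)).smul (by norm_num)
  refine (hentropy.add hlog).congr fun v _ => ?_
  rw [Pi.add_apply]
  ring

lemma concaveOn_three_mul_log_smallOrderFactor_sub :
    ConcaveOn ℝ (Icc 0 1) fun v => 3 * (log (smallOrderFactor v) + -(v * log (6 + v))) :=
  (concaveOn_log_smallOrderFactor.add concaveOn_neg_mul_log_six_add).smul (by norm_num)

lemma log_smallOrderBound {v : ℝ} (hv : 0 < v) (hv₁ : v ≤ 1) :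
    log (((v / (6 + v)) ^ v * smallOrderFactor v) ^ 3 * (v + 0.095)) =
      3 * (v * log v) + log (v + 0.095) + 3 * (log (smallOrderFactor v) + -(v * log (6 + v))) := by
  have hR := smallOrderFactor_pos ⟨hv.le, hv₁⟩
  rw [log_mul (by positivity) (by positivity), log_pow, log_mul (by positivity) hR.ne',
    log_rpow (by positivity), log_div hv.ne' (by positivity)]
  push_cast
  ring

/-- The tangent at `s` of the convex part `3 v log v + log (v + 0.095)` of the logarithm of
`((v / (6 + v)) ^ v * smallOrderFactor v) ^ 3 * (v + 0.095)`, plus its concave part: a concave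
minorant of that logarithm on `[0, 1]`. -/
def smallOrderMinorant (s v : ℝ) : ℝ :=
  3 * (s * log s) + log (s + 0.095) + (3 * (log s + 1) + (s + 0.095)⁻¹) * (v - s) +
    3 * (log (smallOrderFactor v) + -(v * log (6 + v)))

lemma log_le_smallOrderMinorant {s p a b : ℝ} (n m : ℕ) (hs : 0 < s) (hp : p ∈ Icc 0 1)
    (ha : 0 ≤ a) (hb : b ∈ Icc 0 1)
    (hle : (6 + p) / s ≤ (∑ i ∈ Finset.range 8, a ^ i / i !) ^ n)
    (hge : (∑ i ∈ Finset.range 8, b ^ i / i ! + b ^ 8 * ((8 : ℕ) + 1) / (8! * (8 : ℕ))) ^ m ≤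
      (s + 0.095) * smallOrderFactor p ^ 3 / 0.08953)
    (hab : 3 * p * (n * a) ≤ m * b + 3 * (p - s) + (p - s) / (s + 0.095)) :
    log 0.08953 ≤ smallOrderMinorant s p := by
  have hp₀ : 0 ≤ p := hp.1
  have hR := smallOrderFactor_pos hp
  have hlog := log_le_natCast_mul n 8 (by positivity) ha hle
  have hlog' := natCast_mul_le_log m (by norm_num) (by positivity) hb.1 hb.2 hge
  rw [log_div (by positivity) hs.ne'] at hlog
  rw [log_div (by positivity) (by norm_num), log_mul (by positivity) (by positivity), log_pow]
    at hlog'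
  push_cast at hlog'
  rw [div_eq_mul_inv] at hab
  rw [smallOrderMinorant]
  linarith [mul_le_mul_of_nonneg_left hlog (by positivity : 0 ≤ 3 * p)]

lemma le_smallOrderBound_of_mem_Icc {s p q v : ℝ} (hs : 0 < s) (hp : 0 ≤ p) (hq : q ≤ 1)
    (hv₀ : 0 < v) (hv : v ∈ Icc p q) (hleft : log 0.08953 ≤ smallOrderMinorant s p)
    (hright : log 0.08953 ≤ smallOrderMinorant s q) :
    0.08953 ≤ ((v / (6 + v)) ^ v * smallOrderFactor v) ^ 3 * (v + 0.095) := by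
  have hv₁ : v ≤ 1 := hv.2.trans hq
  have hR := smallOrderFactor_pos ⟨hv₀.le, hv₁⟩
  rw [← log_le_log_iff (by norm_num) (by positivity), log_smallOrderBound hv₀ hv₁]
  exact le_add_of_le_tangent_add (convexOn_three_mul_log_add_log (by norm_num))
    (concaveOn_three_mul_log_smallOrderFactor_sub.subset (Icc_subset_Icc hp hq) (convex_Icc p q))
    hs hv₀ hv (hasDerivAt_three_mul_log_add_log (by norm_num) hs) hleft hright

lemma le_smallOrderBound {v : ℝ} (hv : 0 < v) (hv₁ : v ≤ 1) :
    0.08953 ≤ ((v / (6 + v)) ^ v * smallOrderFactor v) ^ 3 * (v + 0.095) := by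
  -- On each interval `s` is the point of tangency, and `n * a` and `m * b` are rational bounds for
  -- the logarithms at its end points.
  rcases le_total v (3 / 50) with h₁ | h₁
  · refine le_smallOrderBound_of_mem_Icc (s := 163 / 5000) (by norm_num) (by norm_num)
      (by norm_num) hv ⟨hv.le, h₁⟩
      (log_le_smallOrderMinorant 6 1 (a := 87 / 100) (b := 177 / 500) ?_ ?_ ?_ ?_ ?_ ?_ ?_)
      (log_le_smallOrderMinorant 6 1 (a := 871 / 1000) (b := 129 / 200) ?_ ?_ ?_ ?_ ?_ ?_ ?_) <;>
    norm_num [smallOrderFactor, Finset.sum_range_succ, Nat.factorial]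
  rcases le_total v (7 / 25) with h₂ | h₂
  · refine le_smallOrderBound_of_mem_Icc (s := 1 / 8) (by norm_num) (by norm_num)
      (by norm_num) hv ⟨h₁, h₂⟩
      (log_le_smallOrderMinorant 5 2 (a := 1941 / 2500) (b := 1487 / 2500) ?_ ?_ ?_ ?_ ?_ ?_ ?_)
      (log_le_smallOrderMinorant 5 3 (a := 1567 / 2000) (b := 283 / 400) ?_ ?_ ?_ ?_ ?_ ?_ ?_) <;>
    norm_num [smallOrderFactor, Finset.sum_range_succ, Nat.factorial]
  rcases le_total v (59 / 100) with h₃ | h₃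
  · refine le_smallOrderBound_of_mem_Icc (s := 43 / 100) (by norm_num) (by norm_num)
      (by norm_num) hv ⟨h₂, h₃⟩
      (log_le_smallOrderMinorant 3 3 (a := 447 / 500) (b := 997 / 1000) ?_ ?_ ?_ ?_ ?_ ?_ ?_)
      (log_le_smallOrderMinorant 3 5 (a := 91 / 100) (b := 1619 / 2000) ?_ ?_ ?_ ?_ ?_ ?_ ?_) <;>
    norm_num [smallOrderFactor, Finset.sum_range_succ, Nat.factorial]
  rcases le_total v (91 / 100) with h₄ | h₄
  · refine le_smallOrderBound_of_mem_Icc (s := 19 / 25) (by norm_num) (by norm_num)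
      (by norm_num) hv ⟨h₃, h₄⟩
      (log_le_smallOrderMinorant 3 5 (a := 18 / 25) (b := 907 / 1000) ?_ ?_ ?_ ?_ ?_ ?_ ?_)
      (log_le_smallOrderMinorant 3 6 (a := 7359 / 10000) (b := 9003 / 10000)
        ?_ ?_ ?_ ?_ ?_ ?_ ?_) <;>
    norm_num [smallOrderFactor, Finset.sum_range_succ, Nat.factorial]
  · refine le_smallOrderBound_of_mem_Icc (s := 1) (by norm_num) (by norm_num)
      (by norm_num) hv ⟨h₄, hv₁⟩
      (log_le_smallOrderMinorant 2 6 (a := 121 / 125) (b := 47 / 50) ?_ ?_ ?_ ?_ ?_ ?_ ?_)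
      (log_le_smallOrderMinorant 2 6 (a := 39 / 40) (b := 39 / 40) ?_ ?_ ?_ ?_ ?_ ?_ ?_) <;>
    norm_num [smallOrderFactor, Finset.sum_range_succ, Nat.factorial]

lemma smallOrderBound_le_besselJ {v : ℝ} (hv : 0 < v) (hv₁ : v < 1) :
    (v / (6 + v)) ^ v * smallOrderFactor v ≤ besselJ v v := by
  have hkershaw := rpow_mul_Gamma_add_le (y := 3) (by norm_num) hv hv₁
  have hfactorial : Gamma (3 + 1) = 6 := by exact_mod_cast Gamma_nat_eq_factorial 3
  have hshift : Gamma (3 + v) = (v + 2) * ((v + 1) * Gamma (v + 1)) := by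
    rw [← Gamma_add_one (by positivity), show 3 + v = v + 2 + 1 by ring,
      Gamma_add_one (by positivity)]
    ring_nf
  have hseries := one_sub_div_le_Gamma_mul_besselClifford_neg hv.le
    (by positivity : 0 ≤ v ^ 2 / 4) (by nlinarith)
  have hΓ := Gamma_pos_of_pos (by positivity : 0 < v + 1)
  rw [hshift, hfactorial] at hkershaw
  set C := besselClifford v (-(v ^ 2 / 4))
  have hlower : 0 < 1 - v ^ 2 / 4 / (v + 1) := by
    rw [sub_pos, div_lt_one (by positivity)]; nlinarith
  have hC : 0 < C := (mul_pos_iff_of_pos_left hΓ).1 (hlower.trans_le hseries)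
  have hpow : (v / (6 + v)) ^ v = (v / 2) ^ v * (3 + v / 2) ^ (1 - v) / (3 + v / 2) := by
    rw [rpow_one_sub' (by positivity) (by linarith), show v / (6 + v) = v / 2 / (3 + v / 2) by
      field_simp; ring, div_rpow (by positivity) (by positivity)]
    field_simp
  calc (v / (6 + v)) ^ v * smallOrderFactor v
      = (v / 2) ^ v * ((3 + v / 2) ^ (1 - v) * ((v + 2) * (v + 1)) / 6 *
          (1 - v ^ 2 / 4 / (v + 1))) := by
        rw [hpow, smallOrderFactor]; field_simp; ring
    _ ≤ (v / 2) ^ v * ((3 + v / 2) ^ (1 - v) * ((v + 2) * (v + 1)) / 6 * (Gamma (v + 1) * C)) := by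
        gcongr
    _ = (v / 2) ^ v * ((3 + v / 2) ^ (1 - v) * ((v + 2) * ((v + 1) * Gamma (v + 1))) / 6 * C) := by
        ring
    _ ≤ (v / 2) ^ v * (6 / 6 * C) := by gcongr
    _ = besselJ v v := by
        rw [besselJ_eq_rpow_mul_besselClifford v hv, div_self (by norm_num), one_mul]

lemma le_besselJ_pow_three_mul_of_lt_one {v : ℝ} (hv : 0 < v) (hv₁ : v < 1) :
    0.08953 ≤ besselJ v v ^ 3 * (v + 0.095) := by
  have hR := smallOrderFactor_pos ⟨hv.le, hv₁.le⟩
  refine (le_smallOrderBound hv hv₁.le).trans ?_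
  gcongr
  exact smallOrderBound_le_besselJ hv hv₁

/-! ### Hankel's integral -/

open Complex (I)
open scoped FourierTransform

section Laplace

variable {s : ℝ} {r : ℂ}

lemma integrableOn_rpow_mul_exp_neg_mul {b : ℝ} (hs : -1 < s) (hb : 0 < b) :
    IntegrableOn (fun t : ℝ => t ^ s * exp (-b * t)) (Ioi 0) := by
  simpa using integrableOn_rpow_mul_exp_neg_mul_rpow hs one_pos hb

lemma integrableOn_rpow_mul_cexp_neg_mul (hs : -1 < s) (hr : 0 < r.re) :
    IntegrableOn (fun t : ℝ => ((t ^ s : ℝ) : ℂ) * Complex.exp (-(r * t))) (Ioi 0) := by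
  refine (integrableOn_rpow_mul_exp_neg_mul hs hr).mono'
    (Measurable.aestronglyMeasurable (by fun_prop)) ?_
  filter_upwards [ae_restrict_mem measurableSet_Ioi] with t ht
  rw [norm_mul, Complex.norm_exp, Complex.norm_of_nonneg (rpow_nonneg (le_of_lt ht) _)]
  simp

lemma norm_rpow_mul_cexp_neg_mul_mul_neg_le {b t : ℝ} (ht : 0 < t) (hr : b ≤ r.re) :
    ‖((t ^ (s - 1) : ℝ) : ℂ) * (Complex.exp (-(r * t)) * -t)‖ ≤ t ^ s * exp (-b * t) := by
  have hexp : exp (-(r * t)).re ≤ exp (-b * t) := by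
    rw [exp_le_exp, Complex.neg_re, Complex.re_mul_ofReal, neg_mul]
    gcongr
  calc ‖((t ^ (s - 1) : ℝ) : ℂ) * (Complex.exp (-(r * t)) * -t)‖
      = t ^ (s - 1) * (exp (-(r * t)).re * t) := by
        rw [norm_mul, norm_mul, Complex.norm_exp, norm_neg, Complex.norm_of_nonneg ht.le,
          Complex.norm_of_nonneg (rpow_nonneg ht.le _)]
    _ ≤ t ^ (s - 1) * (exp (-b * t) * t) := by gcongr
    _ = t ^ s * exp (-b * t) := by
        rw [rpow_sub_one ht.ne']
        field_simp

lemma differentiableAt_integral_rpow_mul_cexp_neg_mul (hs : 0 < s) (hr : 0 < r.re) :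
    DifferentiableAt ℂ
      (fun r : ℂ => ∫ t in Ioi (0 : ℝ), ((t ^ (s - 1) : ℝ) : ℂ) * Complex.exp (-(r * t))) r := by
  have hhalf : {z : ℂ | r.re / 2 < z.re} ∈ 𝓝 r :=
    (isOpen_lt continuous_const Complex.continuous_re).mem_nhds (half_lt_self hr)
  refine (hasDerivAt_integral_of_dominated_loc_of_deriv_le (μ := volume.restrict (Ioi 0))
    (F := fun z t => ((t ^ (s - 1) : ℝ) : ℂ) * Complex.exp (-(z * t)))
    (F' := fun z t => ((t ^ (s - 1) : ℝ) : ℂ) * (Complex.exp (-(z * t)) * -t))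
    (bound := fun t => t ^ s * exp (-(r.re / 2) * t)) hhalf ?_
    (integrableOn_rpow_mul_cexp_neg_mul (by linarith) hr) ?_ ?_
    (integrableOn_rpow_mul_exp_neg_mul (by linarith) (half_pos hr)) ?_).2.differentiableAt
  · exact Eventually.of_forall fun z => Measurable.aestronglyMeasurable (by fun_prop)
  · exact Measurable.aestronglyMeasurable (by fun_prop)
  · filter_upwards [ae_restrict_mem measurableSet_Ioi] with t ht z hz
    exact norm_rpow_mul_cexp_neg_mul_mul_neg_le ht (le_of_lt hz)
  · refine Eventually.of_forall fun t z _ => HasDerivAt.const_mul _ (HasDerivAt.cexp ?_)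
    exact ((hasDerivAt_id' z).mul_const (t : ℂ)).neg.congr_deriv (by ring)

lemma integral_rpow_mul_cexp_neg_ofReal_mul {q : ℝ} (hs : 0 < s) (hq : 0 < q) :
    ∫ t in Ioi (0 : ℝ), ((t ^ (s - 1) : ℝ) : ℂ) * Complex.exp (-(q * t)) =
      Gamma s * (q : ℂ) ^ (-s : ℂ) := by
  have h := congrArg ((↑) : ℝ → ℂ) (integral_rpow_mul_exp_neg_mul_Ioi hs hq)
  rw [← integral_complex_ofReal, one_div, inv_rpow hq.le, ← rpow_neg hq.le, mul_comm] at h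
  simpa [Complex.ofReal_cpow hq.le] using h

-- Both sides are analytic in `r` on the half-plane and agree on the positive axis.
lemma integral_rpow_mul_cexp_neg_mul (hs : 0 < s) (hr : 0 < r.re) :
    ∫ t in Ioi (0 : ℝ), ((t ^ (s - 1) : ℝ) : ℂ) * Complex.exp (-(r * t)) =
      Gamma s * r ^ (-s : ℂ) := by
  have hopen : IsOpen {z : ℂ | 0 < z.re} := isOpen_lt continuous_const Complex.continuous_re
  have hleft : AnalyticOnNhd ℂ
      (fun r : ℂ => ∫ t in Ioi (0 : ℝ), ((t ^ (s - 1) : ℝ) : ℂ) * Complex.exp (-(r * t)))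
      {z : ℂ | 0 < z.re} :=
    DifferentiableOn.analyticOnNhd (fun _ hz =>
      (differentiableAt_integral_rpow_mul_cexp_neg_mul hs hz).differentiableWithinAt) hopen
  have hright : AnalyticOnNhd ℂ (fun r : ℂ => Gamma s * r ^ (-s : ℂ)) {z : ℂ | 0 < z.re} :=
    DifferentiableOn.analyticOnNhd (fun _ hz => ((differentiableAt_id.cpow
      (differentiableAt_const _) (Or.inl hz)).const_mul _).differentiableWithinAt) hopen
  have htendsto : Tendsto ((↑) : ℝ → ℂ) (𝓝[≠] 1) (𝓝[≠] 1) :=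
    tendsto_nhdsWithin_of_tendsto_nhds_of_eventually_within _
      ((Complex.continuous_ofReal.tendsto' 1 1 Complex.ofReal_one).mono_left nhdsWithin_le_nhds)
      (eventually_nhdsWithin_of_forall fun q hq => by simpa using hq)
  refine hleft.eqOn_of_preconnected_of_frequently_eq hright
    (convex_halfSpace_re_gt 0).isPreconnected (z₀ := 1) (by simp)
    (htendsto.frequently (Eventually.frequently ?_)) hr
  filter_upwards [nhdsWithin_le_nhds (Ioi_mem_nhds one_pos)] with q hq
  exact integral_rpow_mul_cexp_neg_ofReal_mul hs hq

end Laplace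

/-- The vertical line `Re = 1` parametrised by its imaginary part, the contour of Hankel's
integral. -/
def unitLine (y : ℝ) : ℂ := 1 + y * I

lemma unitLine_mem_slitPlane (y : ℝ) : unitLine y ∈ Complex.slitPlane :=
  Or.inl (by simp [unitLine])

lemma unitLine_ne_zero (y : ℝ) : unitLine y ≠ 0 :=
  Complex.slitPlane_ne_zero (unitLine_mem_slitPlane y)

lemma one_le_norm_unitLine (y : ℝ) : 1 ≤ ‖unitLine y‖ := by
  simpa [unitLine] using Complex.abs_re_le_norm (unitLine y)

lemma continuous_unitLine : Continuous unitLine := by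
  unfold unitLine
  fun_prop

lemma norm_exp_unitLine (y : ℝ) : ‖Complex.exp (unitLine y)‖ = exp 1 := by
  simp [unitLine, Complex.norm_exp]

lemma norm_unitLine_cpow_neg (s y : ℝ) :
    ‖unitLine y ^ (-s : ℂ)‖ = (1 + ‖y‖ ^ 2) ^ (-s / 2) := by
  have hnorm : ‖unitLine y‖ = (1 + ‖y‖ ^ 2) ^ (1 / 2 : ℝ) := by
    rw [Complex.norm_eq_sqrt_sq_add_sq, sqrt_eq_rpow]
    simp [unitLine]
  rw [← Complex.ofReal_neg, Complex.norm_cpow_real, hnorm, ← rpow_mul (by positivity)]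
  ring_nf

lemma continuous_unitLine_cpow (s : ℂ) : Continuous fun y : ℝ => unitLine y ^ s :=
  continuous_iff_continuousAt.2 fun y =>
    continuous_unitLine.continuousAt.cpow continuousAt_const (unitLine_mem_slitPlane y)

section Hankel

variable {s : ℝ}

lemma integrable_unitLine_cpow_neg (hs : 1 < s) :
    Integrable fun y : ℝ => unitLine y ^ (-s : ℂ) :=
  (integrable_rpow_neg_one_add_norm_sq (E := ℝ) (by simpa using hs)).mono'
    (continuous_unitLine_cpow _).aestronglyMeasurable
    (Eventually.of_forall fun y => (norm_unitLine_cpow_neg s y).le)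

lemma integrable_unitLine_cpow_neg_mul_exp (hs : 1 < s) :
    Integrable fun y : ℝ => unitLine y ^ (-s : ℂ) * Complex.exp (unitLine y) := by
  refine ((integrable_unitLine_cpow_neg hs).norm.mul_const (exp 1)).mono'
    ((continuous_unitLine_cpow _).mul
      (Complex.continuous_exp.comp continuous_unitLine)).aestronglyMeasurable
    (Eventually.of_forall fun y => ?_)
  rw [norm_mul, norm_exp_unitLine]

/-- The Gamma density `t ^ (s - 1) e ^ (-t)` on `t > 0`, without its normalising constant, extended
by zero to `t ≤ 0` (for `s > 1`, when `0 ^ (s - 1) = 0`). -/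
def gammaDensity (s t : ℝ) : ℂ := ((max t 0 ^ (s - 1) * exp (-t) : ℝ) : ℂ)

lemma continuous_gammaDensity (hs : 1 < s) : Continuous (gammaDensity s) :=
  Complex.continuous_ofReal.comp (((continuous_id.max continuous_const).rpow_const
    fun _ => Or.inr (by linarith)).mul (by fun_prop))

lemma gammaDensity_eq_indicator (hs : 1 < s) :
    gammaDensity s =
      (Ioi 0).indicator fun t : ℝ => ((t ^ (s - 1) : ℝ) : ℂ) * Complex.exp (-((1 : ℂ) * t)) := by
  ext t
  by_cases ht : 0 < t
  · simp [gammaDensity, ht, max_eq_left ht.le]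
  · simp [gammaDensity, ht, max_eq_right (not_lt.1 ht), zero_rpow (sub_pos.2 hs).ne']

lemma integrable_gammaDensity (hs : 1 < s) : Integrable (gammaDensity s) := by
  rw [gammaDensity_eq_indicator hs, integrable_indicator_iff measurableSet_Ioi]
  exact integrableOn_rpow_mul_cexp_neg_mul (by linarith) (by simp)

lemma fourier_gammaDensity (hs : 1 < s) (w : ℝ) :
    𝓕 (gammaDensity s) w = Gamma s * unitLine (2 * π * w) ^ (-s : ℂ) := by
  rw [fourier_real_eq_integral_exp_smul, gammaDensity_eq_indicator hs,
    ← integral_rpow_mul_cexp_neg_mul (by linarith) (by simp [unitLine]),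
    ← integral_indicator measurableSet_Ioi]
  congr 1 with t
  by_cases ht : 0 < t
  · rw [indicator_of_mem (mem_Ioi.2 ht), indicator_of_mem (mem_Ioi.2 ht), smul_eq_mul,
      mul_left_comm, ← Complex.exp_add, unitLine]
    congr 2
    push_cast
    ring
  · simp [ht]

-- Fourier inversion for the Gamma density at the point `1`.
lemma integral_unitLine_cpow_neg_mul_exp (hs : 1 < s) :
    ∫ y : ℝ, unitLine y ^ (-s : ℂ) * Complex.exp (unitLine y) = 2 * π / Gamma s := by
  have hGamma : (Gamma s : ℂ) ≠ 0 := mod_cast (Gamma_pos_of_pos (by linarith)).ne'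
  have hfourier : 𝓕 (gammaDensity s) = fun w => Gamma s * unitLine (2 * π * w) ^ (-s : ℂ) :=
    funext (fourier_gammaDensity hs)
  have hintegrable : Integrable (𝓕 (gammaDensity s)) := by
    rw [hfourier]
    exact ((integrable_unitLine_cpow_neg hs).comp_mul_left' (by positivity)).const_mul _
  have hinv := congrFun ((continuous_gammaDensity hs).fourierInv_fourier_eq
    (integrable_gammaDensity hs) hintegrable) 1
  have hval : gammaDensity s 1 = Complex.exp (-1) := by simp [gammaDensity]
  have hintegrand (w : ℝ) : Complex.exp (((2 * π * inner ℝ w 1 : ℝ) : ℂ) * I) •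
      (Gamma s * unitLine (2 * π * w) ^ (-s : ℂ)) = Gamma s * Complex.exp (-1) *
        (unitLine (2 * π * w) ^ (-s : ℂ) * Complex.exp (unitLine (2 * π * w))) := by
    have hexp : Complex.exp (((2 * π * inner ℝ w 1 : ℝ) : ℂ) * I) =
        Complex.exp (-1) * Complex.exp (unitLine (2 * π * w)) := by
      rw [← Complex.exp_add]
      simp [unitLine]
    rw [hexp, smul_eq_mul]
    ring
  rw [hfourier, fourierInv_eq'] at hinv
  simp_rw [hintegrand] at hinv
  rw [integral_const_mul, Measure.integral_comp_mul_left
    (fun y => unitLine y ^ (-s : ℂ) * Complex.exp (unitLine y)), hval,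
    abs_of_pos (by positivity), Complex.real_smul, Complex.ofReal_inv] at hinv
  have hpi : (π : ℂ) ≠ 0 := mod_cast pi_ne_zero
  push_cast at hinv
  refine mul_left_cancel₀ (Complex.exp_ne_zero (-1)) ?_
  field_simp at hinv ⊢
  linear_combination hinv

end Hankel

section BesselClifford

variable {v : ℝ}

lemma pow_div_factorial_mul_unitLine_cpow (v y : ℝ) (z : ℂ) (k : ℕ) :
    z ^ k / k ! * unitLine y ^ (-(k + v + 1 : ℝ) : ℂ) =
      unitLine y ^ (-(v + 1 : ℝ) : ℂ) * ((z / unitLine y) ^ k / k !) := by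
  rw [show (-(k + v + 1 : ℝ) : ℂ) = -(v + 1 : ℝ) + -(k : ℂ) by push_cast; ring,
    Complex.cpow_add _ _ (unitLine_ne_zero y), Complex.cpow_neg _ (k : ℂ), Complex.cpow_natCast,
    div_pow]
  ring

lemma norm_div_unitLine_le (z y : ℝ) : ‖(z : ℂ) / unitLine y‖ ≤ |z| := by
  rw [norm_div, Complex.norm_real, norm_eq_abs]
  exact div_le_self (abs_nonneg _) (one_le_norm_unitLine y)

lemma integrable_besselCliffordIntegrand (hv : 0 < v) (z : ℝ) :
    Integrable fun y : ℝ => unitLine y ^ (-(v + 1 : ℝ) : ℂ) *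
      Complex.exp (unitLine y + z / unitLine y) := by
  refine ((integrable_unitLine_cpow_neg_mul_exp (by linarith : 1 < v + 1)).norm.mul_const
    (exp |z|)).mono' ?_ (Eventually.of_forall fun y => ?_)
  · exact ((continuous_unitLine_cpow _).mul (Complex.continuous_exp.comp (continuous_unitLine.add
      (continuous_const.div continuous_unitLine unitLine_ne_zero)))).aestronglyMeasurable
  · rw [Complex.exp_add, ← mul_assoc, norm_mul, Complex.norm_exp (z / unitLine y)]
    gcongr
    exact (Complex.re_le_norm _).trans (norm_div_unitLine_le z y)

lemma hasSum_besselCliffordIntegrand (v z y : ℝ) :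
    HasSum (fun k : ℕ => (z : ℂ) ^ k / k ! *
        (unitLine y ^ (-(k + v + 1 : ℝ) : ℂ) * Complex.exp (unitLine y)))
      (unitLine y ^ (-(v + 1 : ℝ) : ℂ) * Complex.exp (unitLine y + z / unitLine y)) := by
  have h := (NormedSpace.expSeries_div_hasSum_exp ((z : ℂ) / unitLine y)).mul_left
    (unitLine y ^ (-(v + 1 : ℝ) : ℂ) * Complex.exp (unitLine y))
  rw [← Complex.exp_eq_exp_ℂ, mul_assoc, ← Complex.exp_add] at h
  refine h.congr_fun fun k => ?_
  rw [← mul_assoc, pow_div_factorial_mul_unitLine_cpow]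
  ring

lemma norm_besselCliffordIntegrand_term_le (v z y : ℝ) (k : ℕ) :
    ‖(z : ℂ) ^ k / k ! * (unitLine y ^ (-(k + v + 1 : ℝ) : ℂ) * Complex.exp (unitLine y))‖ ≤
      |z| ^ k / k ! * ‖unitLine y ^ (-(v + 1 : ℝ) : ℂ) * Complex.exp (unitLine y)‖ := by
  rw [← mul_assoc, pow_div_factorial_mul_unitLine_cpow, mul_right_comm, norm_mul, mul_comm,
    norm_div, norm_pow, Complex.norm_natCast]
  gcongr
  exact norm_div_unitLine_le z y

-- Expand `exp (z / ζ)` and apply Hankel's integral to each `ζ ^ (-(k + v + 1))`.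
lemma integral_besselCliffordIntegrand (hv : 0 < v) (z : ℝ) :
    ∫ y : ℝ, unitLine y ^ (-(v + 1 : ℝ) : ℂ) * Complex.exp (unitLine y + z / unitLine y) =
      2 * π * besselClifford v z := by
  have hterm (k : ℕ) : 1 < k + v + 1 := by linarith [(k.cast_nonneg : (0 : ℝ) ≤ k)]
  have hbound := (integrable_unitLine_cpow_neg_mul_exp (by linarith : 1 < v + 1)).norm
  have hsum := hasSum_integral_of_dominated_convergence (μ := volume)
    (fun k y => |z| ^ k / k ! * ‖unitLine y ^ (-(v + 1 : ℝ) : ℂ) * Complex.exp (unitLine y)‖)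
    (fun k => ((integrable_unitLine_cpow_neg_mul_exp (hterm k)).const_mul
      ((z : ℂ) ^ k / k !)).aestronglyMeasurable)
    (fun k => Eventually.of_forall fun y => norm_besselCliffordIntegrand_term_le v z y k)
    (Eventually.of_forall fun y => (summable_pow_div_factorial |z|).mul_right _)
    (by simp_rw [tsum_mul_right]; exact hbound.const_mul _)
    (Eventually.of_forall fun y => hasSum_besselCliffordIntegrand v z y)
  have hseries := (Complex.hasSum_ofReal.2 (summable_besselClifford hv.le z).hasSum).mul_left
    (2 * π : ℂ)
  refine hsum.unique (hseries.congr_fun fun k => ?_)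
  rw [integral_const_mul, integral_unitLine_cpow_neg_mul_exp (hterm k), besselCliffordCoeff]
  push_cast
  ring

end BesselClifford

/-! ### The contour of steepest descent -/

open scoped ComplexConjugate

/-- The integrand `exp (v (sinh w - w))` of Schläfli's integral for `J_v(v)`. -/
def schlafliIntegrand (v : ℝ) (w : ℂ) : ℂ := Complex.exp (v * (Complex.sinh w - w))

/-- The image of `unitLine` under `ζ ↦ log (2 ζ / v)`, which turns Hankel's integral into
Schläfli's. -/
def logLine (v y : ℝ) : ℂ := Complex.log (unitLine y) + (log (2 / v) : ℝ)

/-- The real part `r` of the point `r + iθ`, `0 ≤ θ < π`, of the path of steepest descent of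
`sinh w - w` from its saddle point `0`; it solves `cosh r = θ / sin θ`, so that
`sinh (r + iθ) - (r + iθ)` is real. -/
def descentAbscissa (θ : ℝ) : ℝ := arcosh (sinc θ)⁻¹

/-- The path of steepest descent, parametrised by its imaginary part. -/
def descentPath (θ : ℝ) : ℂ := descentAbscissa θ + θ * I

/-- The real number `w - sinh w` at the point `w = descentPath θ`. -/
def descentPhase (θ : ℝ) : ℝ :=
  descentAbscissa θ - sinh (descentAbscissa θ) * cos θ

lemma exists_hasDerivAt_schlafliIntegrand (v : ℝ) :
    ∃ H : ℂ → ℂ, H 0 = 0 ∧ ∀ w, HasDerivAt H (schlafliIntegrand v w) w := by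
  have hdiff : Differentiable ℂ (schlafliIntegrand v) := by
    unfold schlafliIntegrand
    fun_prop
  obtain ⟨H, hH₀, hH⟩ := hdiff.isExactOn_univ.with_val_at 0 0
  exact ⟨H, hH₀, fun w => hH w (mem_univ w)⟩

lemma schlafliIntegrand_conj (v : ℝ) (w : ℂ) :
    schlafliIntegrand v (conj w) = conj (schlafliIntegrand v w) := by
  rw [schlafliIntegrand, schlafliIntegrand, ← Complex.exp_conj, map_mul, map_sub,
    ← Complex.sinh_conj, Complex.conj_ofReal]

lemma hasDerivAt_ofReal_mul_I (x : ℝ) : HasDerivAt (fun y : ℝ => (y : ℂ) * I) I x := by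
  simpa using ((hasDerivAt_id (x : ℂ)).comp_ofReal).mul_const I

lemma hasDerivAt_logLine (v y : ℝ) : HasDerivAt (logLine v) (I / unitLine y) y :=
  (((hasDerivAt_ofReal_mul_I y).const_add 1).clog_real (unitLine_mem_slitPlane y)).add_const _

lemma logLine_neg (v y : ℝ) : logLine v (-y) = conj (logLine v y) := by
  rw [logLine, logLine, map_add, Complex.conj_ofReal,
    ← Complex.log_conj _ (Complex.mem_slitPlane_iff_arg.1 (unitLine_mem_slitPlane y)).1]
  simp [unitLine]

section Hankel

variable {v : ℝ}

lemma exp_logLine (hv : 0 < v) (y : ℝ) :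
    Complex.exp (logLine v y) = unitLine y * (2 / v) := by
  rw [logLine, Complex.exp_add, Complex.exp_log (unitLine_ne_zero y), ← Complex.ofReal_exp,
    exp_log (by positivity)]
  push_cast
  rfl

lemma exp_neg_mul_logLine (hv : 0 < v) (y : ℝ) :
    Complex.exp (-(v * logLine v y)) = ((v / 2) ^ v : ℝ) * unitLine y ^ (-v : ℂ) := by
  rw [logLine, mul_add, neg_add, Complex.exp_add, mul_comm,
    Complex.cpow_def_of_ne_zero (unitLine_ne_zero y), rpow_def_of_pos (by positivity),
    ← inv_div 2 v, log_inv]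
  push_cast
  ring_nf

lemma schlafliIntegrand_logLine_mul (hv : 0 < v) (y : ℝ) :
    schlafliIntegrand v (logLine v y) * (I / unitLine y) =
      I * ((v / 2) ^ v : ℝ) * (unitLine y ^ (-(v + 1 : ℝ) : ℂ) *
        Complex.exp (unitLine y + (-(v ^ 2 / 4) : ℝ) / unitLine y)) := by
  have hvc : (v : ℂ) ≠ 0 := mod_cast hv.ne'
  have hζ := unitLine_ne_zero y
  have hsinh : v * Complex.sinh (logLine v y) =
      unitLine y + (-(v ^ 2 / 4) : ℝ) / unitLine y := by
    rw [Complex.sinh, Complex.exp_neg, exp_logLine hv]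
    push_cast
    field_simp
    ring
  have hcpow : unitLine y ^ (-(v + 1 : ℝ) : ℂ) = unitLine y ^ (-v : ℂ) / unitLine y := by
    rw [Complex.ofReal_add, neg_add, Complex.cpow_add _ _ hζ, Complex.ofReal_one,
      Complex.cpow_neg_one, div_eq_mul_inv]
  rw [schlafliIntegrand, mul_sub, sub_eq_add_neg, Complex.exp_add, hsinh, exp_neg_mul_logLine hv,
    hcpow]
  ring

section Primitive

variable {H : ℂ → ℂ}

lemma primitive_conj (hH₀ : H 0 = 0) (hH : ∀ w, HasDerivAt H (schlafliIntegrand v w) w) (w : ℂ) :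
    H (conj w) = conj (H w) := by
  have hreflect (w : ℂ) : HasDerivAt (conj ∘ H ∘ conj) (schlafliIntegrand v w) w := by
    rw [hasDerivAt_conj_conj_iff, ← schlafliIntegrand_conj]
    exact hH (conj w)
  have hzero (w : ℂ) : HasDerivAt (conj ∘ H ∘ conj - H) 0 w := by
    simpa only [sub_self] using (hreflect w).sub (hH w)
  have hconst := is_const_of_deriv_eq_zero (fun w => (hzero w).differentiableAt)
    (fun w => (hzero w).deriv) w 0
  simp only [Pi.sub_apply, Function.comp_apply, map_zero, hH₀, sub_zero, sub_eq_zero] at hconst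
  rw [← hconst, Complex.conj_conj]

lemma integral_unitLine_eq_primitive_logLine (hv : 0 < v) (hH₀ : H 0 = 0)
    (hH : ∀ w, HasDerivAt H (schlafliIntegrand v w) w) (Y : ℝ) :
    I * ((v / 2) ^ v : ℝ) * ∫ y in -Y..Y, unitLine y ^ (-(v + 1 : ℝ) : ℂ) *
        Complex.exp (unitLine y + (-(v ^ 2 / 4) : ℝ) / unitLine y) =
      2 * (H (logLine v Y)).im * I := by
  rw [← intervalIntegral.integral_const_mul,
    intervalIntegral.integral_eq_sub_of_hasDerivAt (f := fun y => H (logLine v y))]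
  · rw [logLine_neg, primitive_conj hH₀ hH, Complex.sub_conj]
    push_cast
    ring
  · intro y _
    rw [← schlafliIntegrand_logLine_mul hv]
    exact (hH _).comp y (hasDerivAt_logLine v y)
  · exact ((integrable_besselCliffordIntegrand hv _).const_mul _).intervalIntegrable

lemma tendsto_im_primitive_logLine (hv : 0 < v) (hH₀ : H 0 = 0)
    (hH : ∀ w, HasDerivAt H (schlafliIntegrand v w) w) :
    Tendsto (fun Y => (H (logLine v Y)).im) atTop (𝓝 (π * besselJ v v)) := by
  have htendsto := (intervalIntegral_tendsto_integral
    (integrable_besselCliffordIntegrand hv (-(v ^ 2 / 4))) tendsto_neg_atTop_atBot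
    tendsto_id).const_mul (I * ((v / 2) ^ v : ℝ))
  simp only [id, integral_unitLine_eq_primitive_logLine hv hH₀ hH,
    integral_besselCliffordIntegrand hv] at htendsto
  convert ((Complex.continuous_im.tendsto _).comp htendsto).div_const 2 using 2 with Y
  · simp
  · rw [besselJ_eq_rpow_mul_besselClifford v hv,
      show I * ((v / 2) ^ v : ℝ) * (2 * π * besselClifford v (-(v ^ 2 / 4)) : ℂ) =
        ((v / 2) ^ v * (2 * π * besselClifford v (-(v ^ 2 / 4))) : ℝ) * I by push_cast; ring,
      Complex.im_ofReal_mul, Complex.I_im]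
    ring

end Primitive

end Hankel

section DescentPath

variable {θ : ℝ}

lemma sinc_pos (hθ : θ ∈ Ico 0 π) : 0 < sinc θ := by
  rcases hθ.1.eq_or_lt with rfl | hpos
  · simp
  · rw [sinc_of_ne_zero hpos.ne']
    exact div_pos (sin_pos_of_pos_of_lt_pi hpos hθ.2) hpos

lemma one_le_inv_sinc (hθ : θ ∈ Ico 0 π) : 1 ≤ (sinc θ)⁻¹ :=
  (one_le_inv₀ (sinc_pos hθ)).2 (sinc_le_one θ)

lemma descentAbscissa_nonneg (hθ : θ ∈ Ico 0 π) : 0 ≤ descentAbscissa θ :=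
  arcosh_nonneg (one_le_inv_sinc hθ)

lemma descentAbscissa_zero : descentAbscissa 0 = 0 := by simp [descentAbscissa]

lemma continuousOn_descentAbscissa : ContinuousOn descentAbscissa (Ico 0 π) :=
  continuousOn_arcosh.comp (continuous_sinc.continuousOn.inv₀ fun _ hθ => (sinc_pos hθ).ne')
    fun _ hθ => one_le_inv_sinc hθ

lemma continuousOn_descentPath : ContinuousOn descentPath (Ico 0 π) :=
  (Complex.continuous_ofReal.comp_continuousOn continuousOn_descentAbscissa).add (by fun_prop)

lemma continuousOn_descentPhase : ContinuousOn descentPhase (Ico 0 π) :=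
  continuousOn_descentAbscissa.sub
    ((continuous_sinh.comp_continuousOn continuousOn_descentAbscissa).mul
      continuous_cos.continuousOn)

lemma cosh_descentAbscissa_mul_sin (hθ : θ ∈ Ico 0 π) :
    cosh (descentAbscissa θ) * sin θ = θ := by
  rw [descentAbscissa, cosh_arcosh (one_le_inv_sinc hθ)]
  rcases hθ.1.eq_or_lt with rfl | hpos
  · simp
  · have hsin := sin_pos_of_pos_of_lt_pi hpos hθ.2
    rw [sinc_of_ne_zero hpos.ne']
    field_simp

lemma cosh_descentAbscissa (hθ : θ ∈ Ioo 0 π) : cosh (descentAbscissa θ) = θ / sin θ := by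
  rw [eq_div_iff (sin_pos_of_pos_of_lt_pi hθ.1 hθ.2).ne',
    cosh_descentAbscissa_mul_sin (Ioo_subset_Ico_self hθ)]

lemma sinh_descentAbscissa (hθ : θ ∈ Ioo 0 π) :
    sinh (descentAbscissa θ) = √((θ / sin θ) ^ 2 - 1) := by
  rw [descentAbscissa, sinh_arcosh (one_le_inv_sinc (Ioo_subset_Ico_self hθ)),
    sinc_of_ne_zero hθ.1.ne', inv_div]

lemma schlafliIntegrand_descentPath (v : ℝ) (hθ : θ ∈ Ico 0 π) :
    schlafliIntegrand v (descentPath θ) = exp (-(v * descentPhase θ)) := by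
  have hcosh : Complex.cosh (descentAbscissa θ) * Complex.sin θ = θ :=
    mod_cast cosh_descentAbscissa_mul_sin hθ
  rw [schlafliIntegrand, Complex.ofReal_exp, descentPath, descentPhase, Complex.sinh_add,
    Complex.sinh_mul_I, Complex.cosh_mul_I, ← mul_assoc, hcosh]
  push_cast
  ring_nf

lemma one_lt_div_sin (hθ : θ ∈ Ioo 0 π) : 1 < θ / sin θ :=
  (one_lt_div (sin_pos_of_pos_of_lt_pi hθ.1 hθ.2)).2 (sin_lt hθ.1)

lemma hasDerivAt_descentAbscissa (hθ : θ ∈ Ioo 0 π) :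
    HasDerivAt descentAbscissa
      ((√((θ / sin θ) ^ 2 - 1))⁻¹ * ((sin θ - θ * cos θ) / sin θ ^ 2)) θ := by
  have hdiv : HasDerivAt (fun θ => θ / sin θ) ((sin θ - θ * cos θ) / sin θ ^ 2) θ := by
    simpa only [one_mul] using
      (hasDerivAt_id' θ).fun_div (hasDerivAt_sin θ) (sin_pos_of_pos_of_lt_pi hθ.1 hθ.2).ne'
  refine ((hasDerivAt_arcosh (one_lt_div_sin hθ)).comp θ hdiv).congr_of_eventuallyEq ?_
  filter_upwards [Ioi_mem_nhds hθ.1] with t ht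
  simp [descentAbscissa, sinc_of_ne_zero (ne_of_gt ht)]

lemma hasDerivAt_descentPhase (hθ : θ ∈ Ioo 0 π) :
    HasDerivAt descentPhase
      ((θ - sin θ * cos θ) ^ 2 / (sin θ ^ 3 * √((θ / sin θ) ^ 2 - 1))) θ := by
  have hsin := sin_pos_of_pos_of_lt_pi hθ.1 hθ.2
  have hsq_pos : 0 < (θ / sin θ) ^ 2 - 1 := by nlinarith [one_lt_div_sin hθ]
  have hsqrt_pos : 0 < √((θ / sin θ) ^ 2 - 1) := sqrt_pos.2 hsq_pos
  have hsqrt_sq : √((θ / sin θ) ^ 2 - 1) ^ 2 = (θ ^ 2 - sin θ ^ 2) / sin θ ^ 2 := by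
    rw [sq_sqrt hsq_pos.le]
    field_simp
  have habscissa := hasDerivAt_descentAbscissa hθ
  refine (habscissa.sub (habscissa.sinh.mul (hasDerivAt_cos θ))).congr_deriv ?_
  rw [cosh_descentAbscissa hθ, sinh_descentAbscissa hθ]
  generalize √((θ / sin θ) ^ 2 - 1) = S at hsqrt_pos hsqrt_sq ⊢
  field_simp
  rw [hsqrt_sq]
  field_simp
  linear_combination (θ ^ 2 - sin θ ^ 2) * sin_sq_add_cos_sq θ

lemma tendsto_descentAbscissa : Tendsto descentAbscissa (𝓝[<] π) atTop := by
  have hmem : ∀ᶠ θ in 𝓝[<] π, θ ∈ Ioo 0 π := Ioo_mem_nhdsLT pi_pos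
  have hsin : Tendsto sin (𝓝[<] π) (𝓝[>] 0) := by
    refine tendsto_nhdsWithin_iff.2
      ⟨(continuous_sin.tendsto' π 0 sin_pi).mono_left nhdsWithin_le_nhds, ?_⟩
    filter_upwards [hmem] with θ hθ using sin_pos_of_pos_of_lt_pi hθ.1 hθ.2
  have hdiv : Tendsto (fun θ => θ / sin θ) (𝓝[<] π) atTop :=
    Tendsto.pos_mul_atTop pi_pos (tendsto_id.mono_left nhdsWithin_le_nhds)
      hsin.inv_tendsto_nhdsGT_zero
  refine tendsto_atTop_mono' _ ?_ (tendsto_log_atTop.comp hdiv)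
  filter_upwards [hmem] with θ hθ
  have hr := descentAbscissa_nonneg (Ioo_subset_Ico_self hθ)
  rw [Function.comp_apply, ← cosh_descentAbscissa hθ, log_le_iff_le_exp (cosh_pos _), cosh_eq]
  linarith [exp_le_exp.2 (neg_le_self hr)]

lemma intervalIntegrable_exp_neg_mul_descentPhase (v : ℝ) {a b : ℝ} (ha : 0 ≤ a) (hab : a ≤ b)
    (hb : b < π) : IntervalIntegrable (fun θ => exp (-(v * descentPhase θ))) volume a b := by
  have hsub : uIcc a b ⊆ Ico 0 π := by
    rw [uIcc_of_le hab]
    exact fun θ hθ => ⟨ha.trans hθ.1, hθ.2.trans_lt hb⟩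
  exact (continuous_exp.comp_continuousOn
    (continuousOn_const.mul (continuousOn_descentPhase.mono hsub)).neg).intervalIntegrable

end DescentPath

section SteepestDescent

variable {v : ℝ} {H : ℂ → ℂ}

lemma hasDerivAt_im_primitive_descentPath (hH : ∀ w, HasDerivAt H (schlafliIntegrand v w) w)
    {θ : ℝ} (hθ : θ ∈ Ioo 0 π) :
    HasDerivAt (fun θ => (H (descentPath θ)).im) (exp (-(v * descentPhase θ))) θ := by
  have hpath : HasDerivAt descentPath _ θ :=
    (hasDerivAt_descentAbscissa hθ).ofReal_comp.add (hasDerivAt_ofReal_mul_I θ)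
  have hcomp := (hH (descentPath θ)).comp θ hpath
  refine (Complex.imCLM.hasFDerivAt.comp_hasDerivAt θ hcomp).congr_deriv ?_
  rw [schlafliIntegrand_descentPath v (Ioo_subset_Ico_self hθ), Complex.imCLM_apply,
    Complex.im_ofReal_mul, Complex.add_im, Complex.ofReal_im, Complex.I_im, zero_add, mul_one]

lemma integral_exp_neg_mul_descentPhase (hH₀ : H 0 = 0)
    (hH : ∀ w, HasDerivAt H (schlafliIntegrand v w) w) {θ : ℝ} (hθ : θ ∈ Ico 0 π) :
    ∫ t in (0 : ℝ)..θ, exp (-(v * descentPhase t)) = (H (descentPath θ)).im := by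
  have hcont : Continuous H := continuous_iff_continuousAt.2 fun w => (hH w).continuousAt
  have hsub : Icc 0 θ ⊆ Ico 0 π := fun t ht => ⟨ht.1, ht.2.trans_lt hθ.2⟩
  rw [intervalIntegral.integral_eq_sub_of_hasDerivAt_of_le hθ.1
    ((Complex.continuous_im.comp hcont).comp_continuousOn (continuousOn_descentPath.mono hsub))
    (fun t ht => hasDerivAt_im_primitive_descentPath hH ⟨ht.1, ht.2.trans hθ.2⟩)
    (intervalIntegrable_exp_neg_mul_descentPhase v le_rfl hθ.1 hθ.2)]
  simp [descentPath, descentAbscissa_zero, hH₀]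

lemma norm_schlafliIntegrand (v r x : ℝ) :
    ‖schlafliIntegrand v (r + x * I)‖ = exp (v * (sinh r * cos x) - v * r) := by
  have hre : (v * (Complex.sinh (r + x * I) - (r + x * I))).re = v * (sinh r * cos x) - v * r := by
    rw [Complex.re_ofReal_mul, Complex.sinh_add, Complex.sinh_mul_I, Complex.cosh_mul_I,
      ← Complex.ofReal_sinh, ← Complex.ofReal_cosh, ← Complex.ofReal_sin, ← Complex.ofReal_cos]
    simp only [Complex.sub_re, Complex.add_re, Complex.mul_re, Complex.ofReal_re, Complex.ofReal_im,
      Complex.mul_im, Complex.I_re, Complex.I_im]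
    ring
  rw [schlafliIntegrand, Complex.norm_exp, hre]

lemma logLine_eq_add_arg_mul_I (hv : 0 < v) {r Y : ℝ} (hnorm : ‖unitLine Y‖ = v * exp r / 2) :
    logLine v Y = r + (unitLine Y).arg * I := by
  have hlog : log (v * exp r / 2) + log (2 / v) = r := by
    rw [← log_mul (by positivity) (by positivity),
      show v * exp r / 2 * (2 / v) = exp r by field_simp, log_exp]
  rw [logLine, Complex.log, hnorm, add_right_comm, ← Complex.ofReal_add, hlog]

lemma mul_sinh_mul_cos_le_one (hv : 0 < v) {r x Y : ℝ} (hr : 0 ≤ r) (hY : 0 ≤ Y)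
    (hnorm : ‖unitLine Y‖ = v * exp r / 2) (hx : x ∈ Icc (unitLine Y).arg π) :
    v * (sinh r * cos x) ≤ 1 := by
  have harg : 0 ≤ (unitLine Y).arg := Complex.arg_nonneg_iff.2 (by simpa [unitLine] using hY)
  have hcos : cos (unitLine Y).arg = 1 / (v * exp r / 2) := by
    rw [Complex.cos_arg (unitLine_ne_zero Y), hnorm]
    simp [unitLine]
  have hcos_le : cos x ≤ cos (unitLine Y).arg := cos_le_cos_of_nonneg_of_le_pi harg hx.2 hx.1
  have hsinh : sinh r ≤ exp r / 2 := by
    rw [sinh_eq]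
    linarith [exp_pos (-r)]
  have : 0 ≤ sinh r := sinh_nonneg_iff.2 hr
  have hcos₀ : 0 ≤ cos (unitLine Y).arg := by
    rw [hcos]
    positivity
  calc v * (sinh r * cos x) ≤ v * (sinh r * cos (unitLine Y).arg) := by gcongr
    _ ≤ v * (exp r / 2 * cos (unitLine Y).arg) := by gcongr
    _ = 1 := by
      rw [hcos]
      field_simp

-- The two points have the same real part; on the vertical segment between them the integrand is
-- at most `exp (1 - v r)`.
lemma im_primitive_le_im_primitive_logLine_add (hv : 0 < v)
    (hH : ∀ w, HasDerivAt H (schlafliIntegrand v w) w) {r θ Y : ℝ} (hr : 0 ≤ r)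
    (hθ : θ ∈ Icc (π / 2) π) (hY : 0 ≤ Y) (hnorm : ‖unitLine Y‖ = v * exp r / 2) :
    (H (r + θ * I)).im ≤ (H (logLine v Y)).im + exp (1 - v * r) * π := by
  set α := (unitLine Y).arg with harg
  have harg₀ : 0 ≤ α := Complex.arg_nonneg_iff.2 (by simpa [unitLine] using hY)
  have hargθ : α ≤ θ := by
    have := (abs_lt.1 (Complex.abs_arg_lt_pi_div_two_iff.2 (.inl (by simp [unitLine] :
      0 < (unitLine Y).re)))).2
    linarith [hθ.1]
  have hderiv (x : ℝ) (_ : x ∈ Icc α θ) : HasDerivWithinAt (fun x : ℝ => H (r + x * I))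
      (schlafliIntegrand v (r + x * I) * I) (Icc α θ) x :=
    ((hH _).comp x ((hasDerivAt_ofReal_mul_I x).const_add (r : ℂ))).hasDerivWithinAt
  have hbound (x : ℝ) (hx : x ∈ Icc α θ) :
      ‖schlafliIntegrand v (r + x * I) * I‖ ≤ exp (1 - v * r) := by
    rw [norm_mul, Complex.norm_I, mul_one, norm_schlafliIntegrand]
    gcongr
    exact mul_sinh_mul_cos_le_one hv hr hY hnorm ⟨hx.1, hx.2.trans hθ.2⟩
  have hdiff := (Complex.abs_im_le_norm _).trans
    (Convex.norm_image_sub_le_of_norm_hasDerivWithin_le hderiv hbound (convex_Icc α θ)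
      (left_mem_Icc.2 hargθ) (right_mem_Icc.2 hargθ))
  have hlength : exp (1 - v * r) * ‖θ - α‖ ≤ exp (1 - v * r) * π := by
    gcongr
    rw [norm_of_nonneg (by linarith)]
    linarith [hθ.2]
  rw [logLine_eq_add_arg_mul_I hv hnorm, ← harg]
  rw [Complex.sub_im] at hdiff
  linarith [(abs_le.1 hdiff).2]

lemma norm_unitLine_sqrt_sq_sub_one {a : ℝ} (ha : 1 ≤ a) : ‖unitLine √(a ^ 2 - 1)‖ = a := by
  have hsq : 0 ≤ a ^ 2 - 1 := by nlinarith
  have hnormSq : Complex.normSq (unitLine √(a ^ 2 - 1)) = a ^ 2 := by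
    rw [Complex.normSq_apply, show (unitLine √(a ^ 2 - 1)).re = 1 by simp [unitLine],
      show (unitLine √(a ^ 2 - 1)).im = √(a ^ 2 - 1) by simp [unitLine], mul_self_sqrt hsq]
    ring
  rw [Complex.norm_def, hnormSq, sqrt_sq (by positivity)]

theorem integral_exp_neg_mul_descentPhase_le (hv : 0 < v) {θ₀ : ℝ} (hθ₀ : 0 ≤ θ₀) (hθ₀π : θ₀ < π) :
    ∫ θ in (0 : ℝ)..θ₀, exp (-(v * descentPhase θ)) ≤ π * besselJ v v := by
  obtain ⟨H, hH₀, hH⟩ := exists_hasDerivAt_schlafliIntegrand v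
  set R : ℝ → ℝ := fun θ => v * exp (descentAbscissa θ) / 2
  have hR_tendsto : Tendsto R (𝓝[<] π) atTop :=
    ((tendsto_exp_atTop.comp tendsto_descentAbscissa).const_mul_atTop hv).atTop_div_const two_pos
  have hY_tendsto : Tendsto (fun θ => √(R θ ^ 2 - 1)) (𝓝[<] π) atTop :=
    tendsto_sqrt_atTop.comp (tendsto_atTop_add_const_right _ (-1)
      ((tendsto_pow_atTop two_ne_zero).comp hR_tendsto))
  have herror : Tendsto (fun θ => exp (1 - v * descentAbscissa θ) * π) (𝓝[<] π) (𝓝 (0 * π)) :=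
    (tendsto_exp_atBot.comp (tendsto_atBot_add_const_left _ 1 (tendsto_neg_atTop_atBot.comp
      (tendsto_descentAbscissa.const_mul_atTop hv)))).mul_const π
  have hlimit := ((tendsto_im_primitive_logLine hv hH₀ hH).comp hY_tendsto).add herror
  rw [zero_mul, add_zero] at hlimit
  refine ge_of_tendsto hlimit ?_
  filter_upwards [Ioo_mem_nhdsLT (max_lt (half_lt_self pi_pos) hθ₀π),
    hR_tendsto.eventually_ge_atTop 1] with θ hθ hRθ
  obtain ⟨hπθ, hθ₀θ⟩ := max_lt_iff.1 hθ.1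
  have hθ_mem : θ ∈ Ico 0 π := ⟨hθ₀.trans hθ₀θ.le, hθ.2⟩
  calc ∫ t in (0 : ℝ)..θ₀, exp (-(v * descentPhase t))
      ≤ ∫ t in (0 : ℝ)..θ, exp (-(v * descentPhase t)) :=
        intervalIntegral.integral_mono_interval le_rfl hθ₀ hθ₀θ.le
          (Eventually.of_forall fun t => (exp_pos _).le)
          (intervalIntegrable_exp_neg_mul_descentPhase v le_rfl hθ_mem.1 hθ.2)
    _ = (H (descentPath θ)).im := integral_exp_neg_mul_descentPhase hH₀ hH hθ_mem
    _ ≤ _ := im_primitive_le_im_primitive_logLine_add hv hH (descentAbscissa_nonneg hθ_mem)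
        ⟨hπθ.le, hθ.2.le⟩ (sqrt_nonneg _) (norm_unitLine_sqrt_sq_sub_one hRθ)

end SteepestDescent

/-! ### A polynomial bound for the phase -/

/-- The `n`-th partial sum of the Taylor series of `sin` at `0`. -/
def sinPartialSum (n : ℕ) (x : ℝ) : ℝ :=
  ∑ k ∈ Finset.range n, (-1) ^ k * x ^ (2 * k + 1) / (2 * k + 1)!

/-- The `n`-th partial sum of the Taylor series of `cos` at `0`. -/
def cosPartialSum (n : ℕ) (x : ℝ) : ℝ :=
  ∑ k ∈ Finset.range n, (-1) ^ k * x ^ (2 * k) / (2 * k)!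

lemma hasDerivAt_pow_succ_div_factorial (n : ℕ) (x : ℝ) :
    HasDerivAt (fun x : ℝ => x ^ (n + 1) / (n + 1)!) (x ^ n / n !) x := by
  refine ((hasDerivAt_pow (n + 1) x).div_const _).congr_deriv ?_
  rw [Nat.factorial_succ, Nat.add_sub_cancel]
  push_cast
  field_simp

lemma hasDerivAt_sinPartialSum (n : ℕ) (x : ℝ) :
    HasDerivAt (sinPartialSum n) (cosPartialSum n x) x := by
  unfold sinPartialSum cosPartialSum
  simp only [mul_div_assoc]
  exact HasDerivAt.fun_sum fun k _ => (hasDerivAt_pow_succ_div_factorial (2 * k) x).const_mul _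

lemma cosPartialSum_succ (n : ℕ) (x : ℝ) :
    cosPartialSum (n + 1) x =
      1 - ∑ k ∈ Finset.range n, (-1) ^ k * (x ^ (2 * k + 1 + 1) / (2 * k + 1 + 1)!) := by
  rw [cosPartialSum, Finset.sum_range_succ', sub_eq_add_neg, ← Finset.sum_neg_distrib, add_comm]
  congr 1
  · simp
  · refine Finset.sum_congr rfl fun k _ => ?_
    rw [pow_succ (-1 : ℝ), show 2 * (k + 1) = 2 * k + 1 + 1 by ring]
    ring

lemma hasDerivAt_cosPartialSum_succ (n : ℕ) (x : ℝ) :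
    HasDerivAt (cosPartialSum (n + 1)) (-sinPartialSum n x) x := by
  rw [funext (cosPartialSum_succ n)]
  unfold sinPartialSum
  simp only [mul_div_assoc]
  exact (HasDerivAt.fun_sum fun k _ =>
    (hasDerivAt_pow_succ_div_factorial (2 * k + 1) x).const_mul _).const_sub 1

lemma nonneg_of_hasDerivAt_nonneg {f f' : ℝ → ℝ} (hf : ∀ x, HasDerivAt f (f' x) x)
    (hf' : ∀ x, 0 ≤ x → 0 ≤ f' x) (hf₀ : f 0 = 0) {x : ℝ} (hx : 0 ≤ x) : 0 ≤ f x := by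
  have hmono : MonotoneOn f (Ici 0) :=
    monotoneOn_of_hasDerivWithinAt_nonneg (convex_Ici 0)
      (fun x _ => (hf x).continuousAt.continuousWithinAt) (fun x _ => (hf x).hasDerivWithinAt)
      (fun x hx => hf' x (interior_subset hx))
  exact hf₀.symm.trans_le (hmono self_mem_Ici hx hx)

lemma sin_sub_sinPartialSum_nonneg_of_cos {n : ℕ}
    (hcos : ∀ x, 0 ≤ x → 0 ≤ (-1) ^ n * (cos x - cosPartialSum n x)) {x : ℝ} (hx : 0 ≤ x) :
    0 ≤ (-1) ^ n * (sin x - sinPartialSum n x) :=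
  nonneg_of_hasDerivAt_nonneg (f := fun x => (-1) ^ n * (sin x - sinPartialSum n x))
    (fun x => ((hasDerivAt_sin x).sub (hasDerivAt_sinPartialSum n x)).const_mul _) hcos
    (by simp [sinPartialSum]) hx

lemma cos_sub_cosPartialSum_nonneg_of_sin {n : ℕ}
    (hsin : ∀ x, 0 ≤ x → 0 ≤ (-1) ^ n * (sin x - sinPartialSum n x)) {x : ℝ} (hx : 0 ≤ x) :
    0 ≤ (-1) ^ (n + 1) * (cos x - cosPartialSum (n + 1) x) :=
  nonneg_of_hasDerivAt_nonneg (f := fun x => (-1) ^ (n + 1) * (cos x - cosPartialSum (n + 1) x))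
    (fun x => (((hasDerivAt_cos x).sub (hasDerivAt_cosPartialSum_succ n x)).const_mul
      _).congr_deriv (by ring)) hsin (by simp [cosPartialSum_succ]) hx

theorem cos_sub_cosPartialSum_nonneg (n : ℕ) {x : ℝ} (hx : 0 ≤ x) :
    0 ≤ (-1) ^ (n + 1) * (cos x - cosPartialSum (n + 1) x) := by
  induction n generalizing x with
  | zero => simp [cosPartialSum, cos_le_one]
  | succ n ih =>
    exact cos_sub_cosPartialSum_nonneg_of_sin
      (fun _ => sin_sub_sinPartialSum_nonneg_of_cos fun _ => ih) hx

theorem sin_sub_sinPartialSum_nonneg (n : ℕ) {x : ℝ} (hx : 0 ≤ x) :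
    0 ≤ (-1) ^ (n + 1) * (sin x - sinPartialSum (n + 1) x) :=
  sin_sub_sinPartialSum_nonneg_of_cos (fun _ => cos_sub_cosPartialSum_nonneg n) hx

/-- The truncated Taylor series in `q = θ ^ 2` of `3 (θ - sin θ cos θ) / (2 θ ^ 3)`. -/
def subSinMulCosPoly (q : ℝ) : ℝ :=
  1 - 1 / 5 * q + 2 / 105 * q ^ 2 - 1 / 945 * q ^ 3 + 2 / 51975 * q ^ 4 - 2 / 2027025 * q ^ 5 +
    4 / 212837625 * q ^ 6

/-- The truncated Taylor series in `q = θ ^ 2` of `sin θ ^ 2 / θ ^ 2`. -/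
def sinSqPoly (q : ℝ) : ℝ :=
  1 - 1 / 3 * q + 2 / 45 * q ^ 2 - 1 / 315 * q ^ 3 + 2 / 14175 * q ^ 4 - 2 / 467775 * q ^ 5 +
    4 / 42567525 * q ^ 6 - 1 / 638512875 * q ^ 7

/-- The truncated Taylor series in `q = θ ^ 2` of `3 (θ ^ 2 - sin θ ^ 2) / θ ^ 4`. -/
def sqSubSinSqPoly (q : ℝ) : ℝ :=
  1 - 2 / 15 * q + 1 / 105 * q ^ 2 - 2 / 4725 * q ^ 3 + 2 / 155925 * q ^ 4 - 4 / 14189175 * q ^ 5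

/-- A quadratic minorant of the square root of `sqSubSinSqPoly` on `[0, 5.6]`. -/
def sqrtPoly (q : ℝ) : ℝ := 1 - 1 / 15 * q + 11 / 5000 * q ^ 2

section PhaseBound

variable {θ q : ℝ}

lemma sub_sin_mul_cos_le (hθ : 0 ≤ θ) :
    θ - sin θ * cos θ ≤ 2 / 3 * θ ^ 3 * subSinMulCosPoly (θ ^ 2) := by
  have h := sin_sub_sinPartialSum_nonneg 7 (by positivity : 0 ≤ 2 * θ)
  norm_num [sinPartialSum, Finset.sum_range_succ, Nat.factorial, sin_two_mul] at h
  unfold subSinMulCosPoly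
  linarith

lemma mul_sinSqPoly_le_sin_sq (hθ : 0 ≤ θ) : θ ^ 2 * sinSqPoly (θ ^ 2) ≤ sin θ ^ 2 := by
  have h := cos_sub_cosPartialSum_nonneg 8 (by positivity : 0 ≤ 2 * θ)
  norm_num [cosPartialSum, Finset.sum_range_succ, Nat.factorial, cos_two_mul, cos_sq'] at h
  unfold sinSqPoly
  linarith

lemma mul_sqSubSinSqPoly_le_sq_sub_sin_sq (hθ : 0 ≤ θ) :
    θ ^ 4 / 3 * sqSubSinSqPoly (θ ^ 2) ≤ θ ^ 2 - sin θ ^ 2 := by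
  have h := cos_sub_cosPartialSum_nonneg 7 (by positivity : 0 ≤ 2 * θ)
  norm_num [cosPartialSum, Finset.sum_range_succ, Nat.factorial, cos_two_mul, cos_sq'] at h
  unfold sqSubSinSqPoly
  linarith

lemma sqrtPoly_pos (q : ℝ) : 0 < sqrtPoly q := by
  unfold sqrtPoly
  nlinarith [sq_nonneg (q - 15)]

lemma sqrtPoly_sq_le (hq : q ≤ 5.6) : sqrtPoly q ^ 2 ≤ sqSubSinSqPoly q := by
  have : 0 ≤ 5.6 - q := sub_nonneg.2 hq
  have h₄ : 0 ≤ q ^ 4 * (5.6 - q) := by positivity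
  have h₂ : 0 ≤ q ^ 2 * (q - 10) ^ 2 := by positivity
  have h₁ : 0 ≤ q ^ 2 * (5.6 - q) := by positivity
  have h₀ : 0 ≤ q ^ 2 := by positivity
  unfold sqrtPoly sqSubSinSqPoly
  linarith

lemma subSinMulCosPoly_sq_le (hq : 0 ≤ q) (hq' : q ≤ 5.6) :
    subSinMulCosPoly q ^ 2 ≤
      sinSqPoly q * sqrtPoly q * (1 + 0.0095 * q ^ 2 + 0.0027 * q ^ 3) := by
  have : 0 ≤ 5.6 - q := sub_nonneg.2 hq'
  -- A Bernstein expansion up to degree `7`, and telescoping bounds for the alternating tail.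
  have bernstein (i j : ℕ) : 0 ≤ q ^ i * (5.6 - q) ^ j := by positivity
  unfold subSinMulCosPoly sinSqPoly sqrtPoly
  linarith [bernstein 2 5, bernstein 3 4, bernstein 4 3, bernstein 5 2, bernstein 6 1,
    bernstein 7 0, bernstein 7 1, bernstein 7 2, bernstein 9 1, bernstein 11 0,
    bernstein 11 1]

lemma sin_mul_sqrt_div_sin_sq_sub_one (hθ : 0 < sin θ) :
    sin θ * √((θ / sin θ) ^ 2 - 1) = √(θ ^ 2 - sin θ ^ 2) := by
  rw [show θ ^ 2 - sin θ ^ 2 = sin θ ^ 2 * ((θ / sin θ) ^ 2 - 1) by field_simp,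
    sqrt_mul (sq_nonneg _), sqrt_sq hθ.le]

lemma mul_sqrtPoly_le_sqrt (hθ : 0 ≤ θ) (hq : θ ^ 2 ≤ 5.6) :
    θ ^ 2 / √3 * sqrtPoly (θ ^ 2) ≤ √(θ ^ 2 - sin θ ^ 2) := by
  refine le_sqrt_of_sq_le ?_
  calc (θ ^ 2 / √3 * sqrtPoly (θ ^ 2)) ^ 2 = θ ^ 4 / 3 * sqrtPoly (θ ^ 2) ^ 2 := by
        rw [mul_pow, div_pow, sq_sqrt (by norm_num)]; ring
    _ ≤ θ ^ 4 / 3 * sqSubSinSqPoly (θ ^ 2) := by gcongr; exact sqrtPoly_sq_le hq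
    _ ≤ θ ^ 2 - sin θ ^ 2 := mul_sqSubSinSqPoly_le_sq_sub_sin_sq hθ

lemma sub_sin_mul_cos_sq_le (hθ : 0 ≤ θ) (hq : θ ^ 2 ≤ 5.6) :
    (θ - sin θ * cos θ) ^ 2 ≤ 4 / (3 * √3) * θ ^ 2 *
      (1 + 0.0095 * (θ ^ 2) ^ 2 + 0.0027 * (θ ^ 2) ^ 3) * (sin θ ^ 2 * √(θ ^ 2 - sin θ ^ 2)) := by
  have hnum : 0 ≤ θ - sin θ * cos θ := by
    linarith [sin_le (by positivity : 0 ≤ 2 * θ), sin_two_mul θ]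
  have hl := sqrtPoly_pos (θ ^ 2)
  set W := 1 + 0.0095 * (θ ^ 2) ^ 2 + 0.0027 * (θ ^ 2) ^ 3
  have hW : 0 < W := by positivity
  calc (θ - sin θ * cos θ) ^ 2 ≤ (2 / 3 * θ ^ 3 * subSinMulCosPoly (θ ^ 2)) ^ 2 := by
        gcongr; exact sub_sin_mul_cos_le hθ
    _ = 4 / 9 * θ ^ 6 * subSinMulCosPoly (θ ^ 2) ^ 2 := by ring
    _ ≤ 4 / 9 * θ ^ 6 * (sinSqPoly (θ ^ 2) * sqrtPoly (θ ^ 2) * W) := by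
        gcongr; exact subSinMulCosPoly_sq_le (by positivity) hq
    _ = 4 / (3 * √3) * θ ^ 2 * W *
          (θ ^ 2 * sinSqPoly (θ ^ 2) * (θ ^ 2 / √3 * sqrtPoly (θ ^ 2))) := by
        field_simp
        rw [sq_sqrt (by norm_num)]
        ring
    _ ≤ 4 / (3 * √3) * θ ^ 2 * W * (sin θ ^ 2 * √(θ ^ 2 - sin θ ^ 2)) := by
        gcongr
        · exact mul_sinSqPoly_le_sin_sq hθ
        · exact mul_sqrtPoly_le_sqrt hθ hq

lemma phase_factor_le (hθ : 0 ≤ θ) :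
    1 + 0.0095 * (θ ^ 2) ^ 2 + 0.0027 * (θ ^ 2) ^ 3 ≤ 1 + 0.01 * θ ^ 3 + 0.00399 * θ ^ 6 := by
  have hamgm : 0.0095 * θ ≤ 0.01 + 0.00129 * θ ^ 3 := by
    nlinarith [mul_nonneg (add_nonneg hθ (by norm_num : (0 : ℝ) ≤ 3.2)) (sq_nonneg (θ - 1.6))]
  linarith [mul_le_mul_of_nonneg_left hamgm (pow_nonneg hθ 3)]

lemma deriv_descentPhase_le (hθ : 0 < θ) (hθ' : θ < 2.365) :
    deriv descentPhase θ ≤ 4 / (3 * √3) * θ ^ 2 * (1 + 0.01 * θ ^ 3 + 0.00399 * θ ^ 6) := by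
  have hθπ : θ ∈ Ioo 0 π := ⟨hθ, by linarith [pi_gt_three]⟩
  have hsin := sin_pos_of_mem_Ioo hθπ
  have hroot : 0 < √(θ ^ 2 - sin θ ^ 2) := sqrt_pos.2 (sub_pos.2 (sin_sq_lt_sq hθ.ne'))
  have hq : θ ^ 2 ≤ 5.6 := by nlinarith
  rw [(hasDerivAt_descentPhase hθπ).deriv, show sin θ ^ 3 * √((θ / sin θ) ^ 2 - 1) =
    sin θ ^ 2 * √(θ ^ 2 - sin θ ^ 2) by rw [← sin_mul_sqrt_div_sin_sq_sub_one hsin]; ring,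
    div_le_iff₀ (by positivity)]
  refine (sub_sin_mul_cos_sq_le hθ.le hq).trans ?_
  gcongr 4 / (3 * √3) * θ ^ 2 * ?_ * _
  exact phase_factor_le hθ.le

theorem descentPhase_le (hθ : 0 ≤ θ) (hθ' : θ ≤ 2.365) :
    descentPhase θ ≤ 4 / (9 * √3) * (θ ^ 3 + 0.005 * θ ^ 6 + 0.00133 * θ ^ 9) := by
  have hpi : (2.365 : ℝ) < π := by linarith [pi_gt_three]
  have hpoly (x : ℝ) : HasDerivAt
      (fun θ => 4 / (9 * √3) * (θ ^ 3 + 0.005 * θ ^ 6 + 0.00133 * θ ^ 9))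
      (4 / (3 * √3) * x ^ 2 * (1 + 0.01 * x ^ 3 + 0.00399 * x ^ 6)) x := by
    refine ((((hasDerivAt_pow 3 x).fun_add ((hasDerivAt_pow 6 x).const_mul 0.005)).fun_add
      ((hasDerivAt_pow 9 x).const_mul 0.00133)).const_mul _).congr_deriv ?_
    push_cast
    field_simp
    ring
  have hmono : MonotoneOn
      (fun θ => 4 / (9 * √3) * (θ ^ 3 + 0.005 * θ ^ 6 + 0.00133 * θ ^ 9) - descentPhase θ)
      (Icc 0 2.365) := by
    refine monotoneOn_of_hasDerivWithinAt_nonneg (convex_Icc _ _) (f' := fun x =>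
      4 / (3 * √3) * x ^ 2 * (1 + 0.01 * x ^ 3 + 0.00399 * x ^ 6) - deriv descentPhase x)
      (ContinuousOn.sub (by fun_prop) (continuousOn_descentPhase.mono (Icc_subset_Ico_right hpi)))
      (fun x hx => ?_) (fun x hx => ?_) <;> rw [interior_Icc] at hx
    · have hphase := hasDerivAt_descentPhase ⟨hx.1, hx.2.trans hpi⟩
      exact ((hpoly x).sub hphase.differentiableAt.hasDerivAt).hasDerivWithinAt
    · exact sub_nonneg.2 (deriv_descentPhase_le hx.1 hx.2)
  have h := hmono ⟨le_rfl, hθ.trans hθ'⟩ ⟨hθ, hθ'⟩ hθ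
  have h₀ : descentPhase 0 = 0 := by simp [descentPhase, descentAbscissa_zero]
  norm_num [h₀] at h ⊢
  linarith

end PhaseBound

/-! ### Orders at least one -/

section CubicExponential

variable {b : ℝ}

lemma pow_mul_exp_neg_mul_pow_three_eq_rpow (b : ℝ) (n : ℕ) (t : ℝ) :
    t ^ n * exp (-(b * t ^ 3)) = t ^ (n : ℝ) * exp (-b * t ^ (3 : ℝ)) := by
  rw [rpow_natCast, neg_mul, ← rpow_natCast t 3, Nat.cast_ofNat]

lemma integrableOn_pow_mul_exp_neg_mul_pow_three (hb : 0 < b) (n : ℕ) :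
    IntegrableOn (fun t : ℝ => t ^ n * exp (-(b * t ^ 3))) (Ioi 0) := by
  simp only [pow_mul_exp_neg_mul_pow_three_eq_rpow]
  exact integrableOn_rpow_mul_exp_neg_mul_rpow (by linarith [n.cast_nonneg (α := ℝ)])
    (by norm_num) hb

lemma integral_pow_mul_exp_neg_mul_pow_three (hb : 0 < b) (n : ℕ) :
    ∫ t in Ioi (0 : ℝ), t ^ n * exp (-(b * t ^ 3)) =
      1 / 3 * b ^ (-((n : ℝ) + 1) / 3) * Gamma (((n : ℝ) + 1) / 3) := by
  simp only [pow_mul_exp_neg_mul_pow_three_eq_rpow]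
  rw [integral_rpow_mul_exp_neg_mul_rpow (by norm_num) (by linarith [n.cast_nonneg (α := ℝ)]) hb,
    mul_comm (1 / 3 : ℝ)]

lemma integral_pow_add_three_mul_exp_neg_mul_pow_three (hb : 0 < b) (n : ℕ) :
    ∫ t in Ioi (0 : ℝ), t ^ (n + 3) * exp (-(b * t ^ 3)) =
      ((n : ℝ) + 1) / (3 * b) * ∫ t in Ioi (0 : ℝ), t ^ n * exp (-(b * t ^ 3)) := by
  rw [integral_pow_mul_exp_neg_mul_pow_three hb, integral_pow_mul_exp_neg_mul_pow_three hb,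
    show (((n + 3 : ℕ) : ℝ) + 1) / 3 = ((n : ℝ) + 1) / 3 + 1 by push_cast; ring,
    show -(((n + 3 : ℕ) : ℝ) + 1) / 3 = -((n : ℝ) + 1) / 3 - 1 by push_cast; ring,
    Gamma_add_one (by positivity), rpow_sub_one hb.ne']
  field_simp

lemma exp_neg_mul_pow_three_mul_eq (b c d t : ℝ) :
    exp (-(b * t ^ 3)) * (1 - b * (c * t ^ 6 + d * t ^ 9)) =
      t ^ 0 * exp (-(b * t ^ 3)) - (b * c * (t ^ 6 * exp (-(b * t ^ 3))) +
        b * d * (t ^ 9 * exp (-(b * t ^ 3)))) := by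
  ring

lemma integrableOn_exp_neg_mul_pow_three_mul (hb : 0 < b) (c d : ℝ) :
    IntegrableOn (fun t : ℝ => exp (-(b * t ^ 3)) * (1 - b * (c * t ^ 6 + d * t ^ 9))) (Ioi 0) := by
  simp only [exp_neg_mul_pow_three_mul_eq]
  have hint := integrableOn_pow_mul_exp_neg_mul_pow_three hb
  exact (hint 0).sub (((hint 6).const_mul _).add ((hint 9).const_mul _))

lemma integral_exp_neg_mul_pow_three_mul (hb : 0 < b) (c d : ℝ) :
    ∫ t in Ioi (0 : ℝ), exp (-(b * t ^ 3)) * (1 - b * (c * t ^ 6 + d * t ^ 9)) =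
      1 / 3 * b ^ (-(1 : ℝ) / 3) * Gamma (1 / 3) *
        (1 - 4 / 9 * c / b - 28 / 27 * d / b ^ 2) := by
  have hint := integrableOn_pow_mul_exp_neg_mul_pow_three hb
  have hrec := integral_pow_add_three_mul_exp_neg_mul_pow_three hb
  simp only [exp_neg_mul_pow_three_mul_eq]
  rw [integral_sub (hint 0) (((hint 6).const_mul _).fun_add ((hint 9).const_mul _)),
    integral_add ((hint 6).const_mul _) ((hint 9).const_mul _), integral_const_mul,
    integral_const_mul, hrec 6, hrec 3, hrec 0, integral_pow_mul_exp_neg_mul_pow_three hb]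
  push_cast
  rw [zero_add]
  field_simp
  ring

end CubicExponential

section Diagonal

variable {v : ℝ}

lemma integral_Ioi_le_intervalIntegral {f : ℝ → ℝ} {a T : ℝ} (hf : IntegrableOn f (Ioi a))
    (haT : a ≤ T) (hfT : ∀ t > T, f t ≤ 0) : ∫ t in Ioi a, f t ≤ ∫ t in a..T, f t := by
  rw [← intervalIntegral.integral_interval_add_Ioi hf (hf.mono_set (Ioi_subset_Ioi haT))]
  exact add_le_of_nonpos_right (setIntegral_nonpos measurableSet_Ioi hfT)

lemma exp_neg_mul_pow_three_mul_nonpos {b t : ℝ} (hb : 0.2565 ≤ b) (ht : 2.365 < t) :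
    exp (-(b * t ^ 3)) * (1 - b * (0.005 * t ^ 6 + 0.00133 * t ^ 9)) ≤ 0 := by
  refine mul_nonpos_of_nonneg_of_nonpos (exp_pos _).le (sub_nonpos.2 ?_)
  calc (1 : ℝ) ≤ 0.2565 * (0.005 * 2.365 ^ 6 + 0.00133 * 2.365 ^ 9) := by norm_num
    _ ≤ b * (0.005 * t ^ 6 + 0.00133 * t ^ 9) := by gcongr

lemma exp_neg_mul_pow_three_mul_le (hv : 0 ≤ v) {t : ℝ} (ht : t ∈ Icc 0 2.365) :
    exp (-(v * (4 / (9 * √3)) * t ^ 3)) *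
        (1 - v * (4 / (9 * √3)) * (0.005 * t ^ 6 + 0.00133 * t ^ 9)) ≤
      exp (-(v * descentPhase t)) := by
  set b := v * (4 / (9 * √3)) with hb
  have hphase : v * descentPhase t ≤ b * t ^ 3 + b * (0.005 * t ^ 6 + 0.00133 * t ^ 9) :=
    (mul_le_mul_of_nonneg_left (descentPhase_le ht.1 ht.2) hv).trans_eq (by rw [hb]; ring)
  calc exp (-(b * t ^ 3)) * (1 - b * (0.005 * t ^ 6 + 0.00133 * t ^ 9))
      ≤ exp (-(b * t ^ 3)) * exp (-(b * (0.005 * t ^ 6 + 0.00133 * t ^ 9))) := by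
        gcongr; exact one_sub_le_exp_neg _
    _ = exp (-(b * t ^ 3 + b * (0.005 * t ^ 6 + 0.00133 * t ^ 9))) := by
        rw [← exp_add, neg_add]
    _ ≤ exp (-(v * descentPhase t)) := by gcongr

lemma integral_exp_neg_mul_pow_three_mul_le (hv : 1 ≤ v) :
    ∫ t in Ioi (0 : ℝ), exp (-(v * (4 / (9 * √3)) * t ^ 3)) *
        (1 - v * (4 / (9 * √3)) * (0.005 * t ^ 6 + 0.00133 * t ^ 9)) ≤ π * besselJ v v := by
  have hpi : (2.365 : ℝ) < π := by linarith [pi_gt_three]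
  have hsqrt : √3 < 1.7321 := by rw [sqrt_lt' (by norm_num)]; norm_num
  have hb : 0.2565 ≤ v * (4 / (9 * √3)) := by
    calc (0.2565 : ℝ) ≤ 1 * (4 / (9 * 1.7321)) := by norm_num
      _ ≤ v * (4 / (9 * √3)) := by gcongr
  refine (integral_Ioi_le_intervalIntegral (T := 2.365)
    (integrableOn_exp_neg_mul_pow_three_mul (by positivity) _ _) (by norm_num)
    fun t ht => exp_neg_mul_pow_three_mul_nonpos hb ht).trans ?_
  refine (intervalIntegral.integral_mono_on (by norm_num)
    (Continuous.intervalIntegrable (by fun_prop) _ _)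
    (intervalIntegrable_exp_neg_mul_descentPhase v le_rfl (by norm_num) hpi)
    fun t ht => exp_neg_mul_pow_three_mul_le (by positivity) ht).trans ?_
  exact integral_exp_neg_mul_descentPhase_le (by positivity) (by norm_num) hpi

lemma Gamma_one_third_mul_le_pi_mul_besselJ (hv : 1 ≤ v) :
    1 / 3 * (v * (4 / (9 * √3))) ^ (-(1 : ℝ) / 3) * Gamma (1 / 3) * (1 - 0.0297 / v) ≤
      π * besselJ v v := by
  refine le_trans ?_ (integral_exp_neg_mul_pow_three_mul_le hv)
  rw [integral_exp_neg_mul_pow_three_mul (by positivity)]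
  have : 0 < Gamma (1 / 3) := Gamma_pos_of_pos (by norm_num)
  have hsqrt : √3 < 1.7321 := by rw [sqrt_lt' (by norm_num)]; norm_num
  refine mul_le_mul_of_nonneg_left ?_ (by positivity)
  have hfirst : 4 / 9 * 0.005 / (v * (4 / (9 * √3))) ≤ 0.0087 / v := by
    rw [show 4 / 9 * 0.005 / (v * (4 / (9 * √3))) = 0.005 * √3 / v by field_simp]
    gcongr
    linarith
  have hsecond : 28 / 27 * 0.00133 / (v * (4 / (9 * √3))) ^ 2 ≤ 0.021 / v := by
    rw [mul_pow, div_pow, mul_pow, sq_sqrt (by norm_num)]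
    have hsq : v ≤ v ^ 2 := by nlinarith
    calc 28 / 27 * 0.00133 / (v ^ 2 * (4 ^ 2 / (9 ^ 2 * 3))) ≤
        28 / 27 * 0.00133 / (v * (4 ^ 2 / (9 ^ 2 * 3))) := by gcongr
      _ ≤ 0.021 / v := by field_simp; norm_num
  have hsum : 0.0297 / v = 0.0087 / v + 0.021 / v := by rw [← add_div]; norm_num
  linarith

lemma one_le_one_sub_div_pow_three_mul (hv : 1 ≤ v) :
    1 ≤ (1 - 0.0297 / v) ^ 3 * (v + 0.095) / v := by
  have hv₀ : 0 < v := by linarith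
  rw [show (1 - 0.0297 / v) ^ 3 * (v + 0.095) / v = (v - 0.0297) ^ 3 * (v + 0.095) / v ^ 4 by
    field_simp, one_le_div (by positivity)]
  obtain ⟨u, hu, rfl⟩ : ∃ u, 0 ≤ u ∧ v = 1 + u := ⟨v - 1, by linarith, by ring⟩
  have hu₂ : 0 ≤ u ^ 2 := by positivity
  have hu₃ : 0 ≤ u ^ 3 := by positivity
  linarith

lemma rpow_neg_one_third_pow_three {b : ℝ} (hb : 0 ≤ b) : (b ^ (-(1 : ℝ) / 3)) ^ 3 = b⁻¹ := by
  rw [← rpow_mul_natCast hb, ← rpow_neg_one]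
  norm_num

theorem Gamma_one_third_pow_three_le_of_one_le (hv : 1 ≤ v) :
    Gamma (1 / 3) ^ 3 / (4 * √3) ≤ π ^ 3 * (besselJ v v ^ 3 * (v + 0.095)) := by
  have hv₀ : 0 < v := by linarith
  have : 0 < Gamma (1 / 3) := Gamma_pos_of_pos (by norm_num)
  have hfactor : 0 < 1 - 0.0297 / v := by
    rw [sub_pos, div_lt_one hv₀]; linarith
  have hmain := Gamma_one_third_mul_le_pi_mul_besselJ hv
  set b := v * (4 / (9 * √3)) with hb
  have hcube : (1 / 3 * b ^ (-(1 : ℝ) / 3) * Gamma (1 / 3) * (1 - 0.0297 / v)) ^ 3 =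
      Gamma (1 / 3) ^ 3 / (4 * √3) * ((1 - 0.0297 / v) ^ 3 / v) := by
    rw [mul_pow, mul_pow, mul_pow, rpow_neg_one_third_pow_three (by positivity), hb]
    field_simp
    rw [sq_sqrt (by norm_num)]
    norm_num
  calc Gamma (1 / 3) ^ 3 / (4 * √3)
      ≤ Gamma (1 / 3) ^ 3 / (4 * √3) * ((1 - 0.0297 / v) ^ 3 * (v + 0.095) / v) :=
        le_mul_of_one_le_right (by positivity) (one_le_one_sub_div_pow_three_mul hv)
    _ = (1 / 3 * b ^ (-(1 : ℝ) / 3) * Gamma (1 / 3) * (1 - 0.0297 / v)) ^ 3 * (v + 0.095) := by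
        rw [hcube]; ring
    _ ≤ (π * besselJ v v) ^ 3 * (v + 0.095) := by gcongr
    _ = π ^ 3 * (besselJ v v ^ 3 * (v + 0.095)) := by ring

/-! ### Elbert's bound -/

theorem Gamma_one_third_pow_three_le_of_lt_one (hv : 0 < v) (hv₁ : v < 1) :
    Gamma (1 / 3) ^ 3 / (4 * √3) ≤ π ^ 3 * (besselJ v v ^ 3 * (v + 0.095)) := by
  have hsqrt : 1.73205 < √3 := lt_sqrt_of_sq_lt (by norm_num)
  have hpi : 3.14159 < π := by linarith [pi_gt_d6]
  calc Gamma (1 / 3) ^ 3 / (4 * √3) ≤ 19.232 / (4 * 1.73205) := by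
        gcongr; exact Gamma_one_third_pow_three_le
    _ ≤ 3.14159 ^ 3 * 0.08953 := by norm_num
    _ ≤ π ^ 3 * (besselJ v v ^ 3 * (v + 0.095)) := by
        gcongr; exact le_besselJ_pow_three_mul_of_lt_one hv hv₁

theorem Gamma_one_third_div_le_besselJ (hv : 0 < v) :
    Gamma (1 / 3) / (2 ^ ((2 : ℝ) / 3) * 3 ^ ((1 : ℝ) / 6) * π * (v + 0.095) ^ ((1 : ℝ) / 3)) ≤
      besselJ v v := by
  have hcube : Gamma (1 / 3) ^ 3 / (4 * √3) ≤ π ^ 3 * (besselJ v v ^ 3 * (v + 0.095)) :=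
    (lt_or_ge v 1).elim (Gamma_one_third_pow_three_le_of_lt_one hv)
      Gamma_one_third_pow_three_le_of_one_le
  have htwo : ((2 : ℝ) ^ ((2 : ℝ) / 3)) ^ 3 = 4 := by
    rw [← rpow_mul_natCast (by norm_num)]; norm_num
  have hthree : ((3 : ℝ) ^ ((1 : ℝ) / 6)) ^ 3 = √3 := by
    rw [← rpow_mul_natCast (by norm_num), sqrt_eq_rpow]; norm_num
  have hshift : ((v + 0.095) ^ ((1 : ℝ) / 3)) ^ 3 = v + 0.095 := by
    rw [← rpow_mul_natCast (by positivity)]; norm_num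
  refine (Odd.strictMono_pow (by decide : Odd 3)).le_iff_le.1 ?_
  rw [div_pow, mul_pow, mul_pow, mul_pow, htwo, hthree, hshift]
  rw [div_le_iff₀ (by positivity)] at hcube ⊢
  linarith

end Diagonal

/-- For every `ν > 0` and `0 < x ≤ 1`,
`J_ν(νx) ≥ (Γ(1/3)/(2^{2/3} 3^{1/6} π (ν+0.095)^{1/3}))·x^ν·exp(ν²(1-x²)/(4ν+4))`. -/
theorem stmt_19 (v : ℝ) (hv : 0 < v) (x : ℝ) (hx0 : 0 < x) (hx1 : x ≤ 1) :
    Real.Gamma (1 / 3) /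
        (2 ^ ((2 : ℝ) / 3) * 3 ^ ((1 : ℝ) / 6) * Real.pi * (v + 0.095) ^ ((1 : ℝ) / 3)) *
      x ^ v * Real.exp (v ^ 2 * (1 - x ^ 2) / (4 * v + 4)) ≤ besselJ v (v * x) := by
  refine le_trans ?_ (besselJ_mul_rpow_mul_exp_le hv hx0 hx1)
  gcongr
  exact Gamma_one_third_div_le_besselJ hv

end
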